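/- arXiv:1711.02514 — 2 statements merged into one kernel-verified Lean document; each statement's English description precedes it below -/
import Mathlib

section
/- There exist a centrally symmetric convex octagon D₈ and a centrally symmetric convex decagon D₁₀ in the Euclidean plane, each of which admits a five-fold translative tiling of the plane but admits no k-fold translative tiling for any k ≤ 4; that is, τ(D₈) = 5 and τ(D₁₀) = 5. -/
open Pointwise

/-- `K + X` is a `k`-fold translative tiling of the plane: the translate multiset
`(x i)` is discrete, every point of the plane belongs to at least `k` of the translates
`K + x i`, and every point belongs to at most `k` of the translates `interior K + x i`
(multiplicity counted over the index set). -/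
def IsKFoldTranslativeTiling {ι : Type} (K : Set (ℝ × ℝ)) (x : ι → ℝ × ℝ) (k : ℕ) : Prop :=
  (∀ R : ℝ, {i : ι | ‖x i‖ ≤ R}.Finite) ∧
  (∀ p : ℝ × ℝ, ∃ s : Finset ι, k ≤ s.card ∧ ∀ i ∈ s, p - x i ∈ K) ∧
  (∀ p : ℝ × ℝ, ∀ s : Finset ι, (∀ i ∈ s, p - x i ∈ interior K) → s.card ≤ k)

/-- `P` is a (two-dimensional) convex polygon whose vertex set is the finite set `V`:
`P` is the convex hull of `V`, every element of `V` is an extreme point of `P`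
(so `V` is exactly the vertex set), and `P` has nonempty interior. -/
def IsConvexPolygon (P : Set (ℝ × ℝ)) (V : Finset (ℝ × ℝ)) : Prop :=
  P = convexHull ℝ (V : Set (ℝ × ℝ)) ∧
  (∀ v ∈ V, v ∈ Set.extremePoints ℝ P) ∧
  (interior P).Nonempty

/-- `P` is symmetric about some point `c`. -/
def IsCentrallySymmetric (P : Set (ℝ × ℝ)) : Prop :=
  ∃ c : ℝ × ℝ, ∀ p ∈ P, 2 • c - p ∈ P

/-- The segment `[a, b]` is an edge of the convex polygon `P` with vertex set `V`. -/
def IsEdge (P : Set (ℝ × ℝ)) (V : Finset (ℝ × ℝ)) (a b : ℝ × ℝ) : Prop :=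
  a ∈ V ∧ b ∈ V ∧ a ≠ b ∧ segment ℝ a b ⊆ frontier P

/-!
Let `m` be the multiplicity of the translates in a `k`-fold tiling by a centrally symmetric polygon.
A point moved slightly in a generic direction lies on no boundary, so each half-open version of the
polygon covers every point exactly `k` times. Comparing two half-open versions that differ in one
pair of opposite edges, and then the two orientations of these edges, shows that each edge `[a, b]`
gives an equation `Δ_{b-a} Δ_{a+b} m = 0`.

The vertices are chosen in `ℤ + ℤ c` times `ℤ` with `c` irrational, so that three suitably chosen
vectors among the `b - a` and `a + b` are independent over `ℤ`. A nonzero bounded locally finite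
function on the plane cannot have three independent periods. Splitting each equation into its two
factors therefore leaves only the case where the sums `a + b` are periods, and they generate `ℤ²`.
Now five lattice translates of the interior share a point, which forces `k ≥ 5`.

Conversely, the lattice `ℤ²` gives a five-fold tiling. Integer heights cut the polygon into
trapezoids, and each right edge of a trapezoid is an integer translate of a left edge of another, so
the number of lattice translates covering a point telescopes to the sum of these integers.
-/

open scoped fwdDiff

section Periods

variable {G : Type*} [AddCommGroup G]

/-- The group of all periods of a function. -/
def periods {α : Type*} (g : G → α) : AddSubgroup G where
  carrier := {v | Function.Periodic g v}
  add_mem' := Function.Periodic.add_period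
  zero_mem' := Function.periodic_with_period_zero g
  neg_mem' := Function.Periodic.neg

lemma mem_periods {α : Type*} {g : G → α} {v : G} : v ∈ periods g ↔ Function.Periodic g v := Iff.rfl

variable {A : Type*} [AddCommGroup A]

lemma mem_periods_iff_fwdDiff_eq_zero {g : G → A} {v : G} : v ∈ periods g ↔ Δ_[v] g = 0 := by
  simp only [mem_periods, Function.Periodic, funext_iff, fwdDiff, Pi.zero_apply, sub_eq_zero]

lemma fwdDiff_comm (v w : G) (g : G → A) : Δ_[v] (Δ_[w] g) = Δ_[w] (Δ_[v] g) := by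
  ext p
  simp only [fwdDiff, add_right_comm p v w]
  abel

lemma periods_le_periods_fwdDiff (w : G) (g : G → A) : periods g ≤ periods (Δ_[w] g) := by
  intro v hv p
  simp only [fwdDiff, add_right_comm p v w, hv _]

lemma fwdDiff_eq_zero_of_fwdDiff_fwdDiff_eq_zero {g : G → ℤ} {B : ℤ} (hB : ∀ p, |g p| ≤ B) {v : G}
    (h : Δ_[v] (Δ_[v] g) = 0) : Δ_[v] g = 0 := by
  have hv := mem_periods_iff_fwdDiff_eq_zero.2 h
  have linear (p : G) (n : ℕ) : g (p + n • v) = g p + n * Δ_[v] g p := by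
    induction n with
    | zero => simp
    | succ n ih =>
      have step : Δ_[v] g (p + n • v) = Δ_[v] g p := hv.nsmul n p
      rw [fwdDiff, ih, add_assoc, ← succ_nsmul] at step
      rw [eq_add_of_sub_eq step]
      push_cast
      ring
  ext p
  by_contra hne
  have hD : 1 ≤ |Δ_[v] g p| := Int.one_le_abs hne
  have hB₀ : 0 ≤ B := (abs_nonneg _).trans (hB p)
  have growth : (2 * B + 1) * |Δ_[v] g p| ≤ 2 * B := calc
    (2 * B + 1) * |Δ_[v] g p| = |g (p + (2 * B + 1).toNat • v) - g p| := by
      rw [linear, add_sub_cancel_left, abs_mul, Int.toNat_of_nonneg (by positivity),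
        abs_of_nonneg (by positivity : 0 ≤ 2 * B + 1)]
    _ ≤ |g (p + (2 * B + 1).toNat • v)| + |g p| := abs_sub _ _
    _ ≤ 2 * B := by linarith [hB (p + (2 * B + 1).toNat • v), hB p]
  nlinarith

/-- Splitting along the two factors of one equation at a time: `Δ_[t i] g` has the period `e i`,
so it falls in the smaller class of functions with that period. -/
theorem eq_zero_of_fwdDiff_fwdDiff_eq_zero {κ : Type*} {e t : κ → G} {I : Finset κ}
    {C : Set (G → A)} (hC : ∀ v, ∀ g ∈ C, Δ_[v] g ∈ C)
    (hper : ∀ g ∈ C, (∀ i ∈ I, e i ∈ periods g ∨ t i ∈ periods g) → g = 0)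
    {g : G → A} (hg : g ∈ C) (h : ∀ i ∈ I, Δ_[e i] (Δ_[t i] g) = 0) : g = 0 := by
  classical
  induction I using Finset.induction_on generalizing C g with
  | empty => exact hper g hg (by simp)
  | insert i I _ ih =>
    rw [Finset.forall_mem_insert] at h
    have periodic_case (v : G) (hv : v = e i ∨ v = t i) (f : G → A) (hf : f ∈ C)
        (hvf : v ∈ periods f) (hI : ∀ j ∈ I, Δ_[e j] (Δ_[t j] f) = 0) : f = 0 := by
      refine ih (C := {f ∈ C | v ∈ periods f})
        (fun w f hf ↦ ⟨hC w f hf.1, periods_le_periods_fwdDiff w f hf.2⟩)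
        (fun f hf hI ↦ hper f hf.1 ?_) ⟨hf, hvf⟩ hI
      rw [Finset.forall_mem_insert]
      exact ⟨by rcases hv with rfl | rfl <;> simp [hf.2], hI⟩
    have hti : Δ_[t i] g = 0 := by
      refine periodic_case (e i) (.inl rfl) _ (hC _ g hg)
        (mem_periods_iff_fwdDiff_eq_zero.2 h.1) fun j hj ↦ ?_
      rw [fwdDiff_comm (t j), fwdDiff_comm (e j), h.2 j hj]
      exact fwdDiff_const _ 0
    exact periodic_case (t i) (.inr rfl) g hg (mem_periods_iff_fwdDiff_eq_zero.2 hti) h.2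

end Periods

section BoundedLocallyFinite

variable {E : Type*} [NormedAddCommGroup E]

/-- A bounded integer-valued function with only finitely many nonzero values on each bounded set,
such as the multiplicity function of the translates of a tiling. -/
structure IsBoundedLocallyFinite (g : E → ℤ) : Prop where
  exists_abs_le : ∃ B, ∀ p, |g p| ≤ B
  finite_inter_support : ∀ S, Bornology.IsBounded S → (S ∩ Function.support g).Finite

namespace IsBoundedLocallyFinite

variable {g : E → ℤ}

lemma fwdDiff (hg : IsBoundedLocallyFinite g) (v : E) : IsBoundedLocallyFinite (Δ_[v] g) where
  exists_abs_le := by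
    obtain ⟨B, hB⟩ := hg.exists_abs_le
    exact ⟨B + B, fun p ↦ (abs_sub _ _).trans (add_le_add (hB _) (hB _))⟩
  finite_inter_support S hS := by
    have shifted := (hg.finite_inter_support _ (hS.vadd v)).preimage
      (add_left_injective v).injOn
    refine (shifted.union (hg.finite_inter_support S hS)).subset fun p hp ↦ ?_
    by_cases h : g p = 0
    · refine .inl ⟨⟨p, hp.1, add_comm v p⟩, ?_⟩
      simpa [_root_.fwdDiff, h] using hp.2
    · exact .inr ⟨hp.1, h⟩

lemma discreteTopology_periods (hg : IsBoundedLocallyFinite g) (hne : g ≠ 0) :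
    DiscreteTopology (periods g) := by
  obtain ⟨p, hp⟩ := Function.ne_iff.1 hne
  have hfin : {v : periods g | (v : E) ∈ Metric.ball 0 1}.Finite := by
    refine ((hg.finite_inter_support _ (Metric.isBounded_ball (x := p) (r := 1))).preimage
      ((add_right_injective p).comp Subtype.val_injective).injOn).subset fun v hv ↦ ⟨?_, ?_⟩
    · simpa using hv
    · simpa [v.2 p] using hp
  refine discreteTopology_of_isOpen_singleton_zero (isOpen_singleton_of_finite_mem_nhds 0 ?_ hfin)
  exact continuous_subtype_val.continuousAt.preimage_mem_nhds (Metric.ball_mem_nhds _ one_pos)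

variable [NormedSpace ℝ E] [FiniteDimensional ℝ E]

lemma eq_zero_of_linearIndependent (hg : IsBoundedLocallyFinite g) {d : ℕ}
    (hd : Module.finrank ℝ E < d) {v : Fin d → E} (hv : LinearIndependent ℤ v)
    (hper : ∀ i, v i ∈ periods g) : g = 0 := by
  by_contra hne
  have := hg.discreteTopology_periods hne
  have hdisc : DiscreteTopology (Submodule.span ℤ (Set.range v)) := by
    rw [← SetLike.isDiscrete_iff_discreteTopology]
    refine (SetLike.isDiscrete_iff_discreteTopology.2 this).mono ?_
    change Submodule.span ℤ (Set.range v) ≤ (periods g).toIntSubmodule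
    rw [Submodule.span_le]
    rintro _ ⟨i, rfl⟩
    exact hper i
  have hrank := Real.finrank_eq_int_finrank_of_discrete hdisc
  rw [Set.finrank, Set.finrank, finrank_span_eq_card hv, Fintype.card_fin] at hrank
  have := Submodule.finrank_le (Submodule.span ℝ (Set.range v))
  omega

/-- If all the `t i` are periods of `Δ_[l] g`, then so is `l`, and `Δ_[l] g = 0` since `g` is
bounded. Otherwise `Δ_[l] g` has too many independent periods. -/
theorem mem_periods_of_fwdDiff_fwdDiff_eq_zero {κ : Type*} [Finite κ] [DecidableEq κ] {e t : κ → E}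
    (hg : IsBoundedLocallyFinite g) (h : ∀ i, Δ_[e i] (Δ_[t i] g) = 0) {d : ℕ}
    (hd : Module.finrank ℝ E < d)
    (hind : ∀ S : Finset κ, S.Nonempty → ∃ j : Fin d → κ,
      LinearIndependent ℤ fun n ↦ S.piecewise e t (j n))
    {l : E} (hl : l ∈ AddSubgroup.closure (Set.range t)) : l ∈ periods g := by
  classical
  have := Fintype.ofFinite κ
  rw [mem_periods_iff_fwdDiff_eq_zero]
  refine eq_zero_of_fwdDiff_fwdDiff_eq_zero (e := e) (t := t) (I := Finset.univ)
    (C := (Δ_[l]) '' {f | IsBoundedLocallyFinite f}) ?_ ?_ ⟨g, hg, rfl⟩ ?_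
  · rintro v _ ⟨f, hf, rfl⟩
    exact ⟨Δ_[v] f, hf.fwdDiff v, fwdDiff_comm _ _ _⟩
  · rintro _ ⟨f, hf, rfl⟩ hper
    set S : Finset κ := {i | e i ∈ periods (Δ_[l] f)}
    rcases S.eq_empty_or_nonempty with hS | hS
    · have ht : ∀ i, t i ∈ periods (Δ_[l] f) := fun i ↦
        (hper i (Finset.mem_univ i)).resolve_left (Finset.filter_eq_empty_iff.1 hS
          (Finset.mem_univ i))
      have hl' : l ∈ periods (Δ_[l] f) :=
        (AddSubgroup.closure_le _).2 (Set.range_subset_iff.2 ht) hl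
      obtain ⟨B, hB⟩ := hf.exists_abs_le
      exact fwdDiff_eq_zero_of_fwdDiff_fwdDiff_eq_zero hB (mem_periods_iff_fwdDiff_eq_zero.1 hl')
    · obtain ⟨j, hj⟩ := hind S hS
      refine (hf.fwdDiff l).eq_zero_of_linearIndependent hd hj fun n ↦ ?_
      by_cases hn : e (j n) ∈ periods (Δ_[l] f)
      · simp [S, hn]
      · simpa [S, hn] using (hper (j n) (Finset.mem_univ _)).resolve_left hn
  · intro i _
    rw [fwdDiff_comm (t i), fwdDiff_comm (e i), h i]
    exact fwdDiff_const _ 0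

end IsBoundedLocallyFinite

end BoundedLocallyFinite

section Strips

variable {κ E : Type*} [NormedAddCommGroup E] [NormedSpace ℝ E]

/-- The intersection of the symmetric strips `|w j p| ≤ h j`, that is, a centrally symmetric convex
polygon given by the normals of its pairs of opposite edges. -/
def strips (w : κ → E →L[ℝ] ℝ) (h : κ → ℝ) : Set E := {p | ∀ j, |w j p| ≤ h j}

variable {w : κ → E →L[ℝ] ℝ} {h : κ → ℝ}

lemma mem_strips {p : E} : p ∈ strips w h ↔ ∀ j, |w j p| ≤ h j := Iff.rfl

lemma neg_mem_strips {p : E} (hp : p ∈ strips w h) : -p ∈ strips w h := fun j ↦ by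
  simpa using hp j

lemma convex_strips : Convex ℝ (strips w h) := by
  have : strips w h = ⋂ j, w j ⁻¹' Set.Icc (-h j) (h j) := by
    ext p; simp [mem_strips, abs_le]
  rw [this]
  exact convex_iInter fun j ↦ (convex_Icc _ _).linear_preimage (w j).toLinearMap

lemma mem_interior_strips [Finite κ] {p : E} (hp : ∀ j, |w j p| < h j) :
    p ∈ interior (strips w h) := by
  have hopen : IsOpen {p | ∀ j, |w j p| < h j} := by
    simp only [Set.ofPred_forall]
    exact isOpen_iInter_of_finite fun j ↦ isOpen_lt (by fun_prop) continuous_const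
  exact interior_maximal (fun q hq j ↦ (hq j).le) hopen hp

lemma mem_extremePoints_strips {p : E} (hp : p ∈ strips w h)
    (hsep : ∀ v, (∀ j, |w j p| = h j → w j v = 0) → v = 0) :
    p ∈ Set.extremePoints ℝ (strips w h) := by
  refine mem_extremePoints_iff_left.2 ⟨hp, ?_⟩
  rintro x₁ h₁ x₂ h₂ ⟨a, b, ha, hb, hab, rfl⟩
  refine sub_eq_zero.1 (hsep _ fun j hj ↦ ?_)
  have hx₁ := abs_le.1 (h₁ j)
  have hx₂ := abs_le.1 (h₂ j)
  simp only [map_sub, map_add, map_smul, smul_eq_mul] at hj ⊢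
  obtain rfl : a = 1 - b := by linarith
  rcases eq_or_eq_neg_of_abs_eq hj with hj | hj <;> nlinarith

lemma neg_mem_extremePoints_strips {p : E} (hp : p ∈ Set.extremePoints ℝ (strips w h)) :
    -p ∈ Set.extremePoints ℝ (strips w h) := by
  have hneg : LinearEquiv.neg ℝ '' strips w h = strips w h := by
    refine Set.Subset.antisymm (Set.image_subset_iff.2 fun _ ↦ neg_mem_strips) fun p hp ↦ ?_
    exact ⟨-p, neg_mem_strips hp, neg_neg p⟩
  rw [← hneg, ← image_extremePoints]
  exact Set.mem_image_of_mem _ hp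

/-- The interval `[-h, h)` or `(-h, h]` from which a small step in the direction of `s` stays in
`[-h, h]`. -/
def halfOpenInterval (s h : ℝ) : Set ℝ := if 0 < s then Set.Ico (-h) h else Set.Ioc (-h) h

lemma halfOpenInterval_subset_Icc (s h : ℝ) : halfOpenInterval s h ⊆ Set.Icc (-h) h := by
  unfold halfOpenInterval
  split_ifs
  exacts [Set.Ico_subset_Icc_self, Set.Ioc_subset_Icc_self]

open Topology Filter in
lemma eventually_add_smul_mem_halfOpenInterval {s : ℝ} (hs : s ≠ 0) (y h : ℝ) :
    ∀ᶠ ε in 𝓝[>] (0 : ℝ), (|y + ε * s| ≤ h → y ∈ halfOpenInterval s h) ∧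
      (y ∈ halfOpenInterval s h → |y + ε * s| < h) := by
  have hlim : Tendsto (fun ε : ℝ ↦ y + ε * s) (𝓝[>] 0) (𝓝 y) :=
    tendsto_nhdsWithin_of_tendsto_nhds (Continuous.tendsto' (by fun_prop) _ _ (by simp))
  have keep_lt (a : ℝ) : ∀ᶠ ε in 𝓝[>] (0 : ℝ), y < a → y + ε * s < a :=
    eventually_imp_distrib_left.2 hlim.eventually_lt_const
  have keep_gt (a : ℝ) : ∀ᶠ ε in 𝓝[>] (0 : ℝ), a < y → a < y + ε * s :=
    eventually_imp_distrib_left.2 hlim.eventually_const_lt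
  filter_upwards [keep_lt h, keep_lt (-h), keep_gt h, keep_gt (-h), self_mem_nhdsWithin]
    with ε lt_h lt_neg gt_h gt_neg hε
  rw [abs_le, abs_lt]
  rcases hs.lt_or_gt with hs | hs
  · have hεs : ε * s < 0 := mul_neg_of_pos_of_neg hε hs
    rw [halfOpenInterval, if_neg hs.not_gt]
    exact ⟨fun hy ↦ ⟨by linarith, not_lt.1 fun hlt ↦ (gt_h hlt).not_ge hy.2⟩,
      fun hy ↦ ⟨gt_neg hy.1, by linarith [hy.2]⟩⟩
  · have hεs : 0 < ε * s := mul_pos hε hs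
    rw [halfOpenInterval, if_pos hs]
    exact ⟨fun hy ↦ ⟨not_lt.1 fun hlt ↦ (lt_neg hlt).not_ge hy.1, by linarith⟩,
      fun hy ↦ ⟨by linarith [hy.1], lt_h hy.2⟩⟩

/-- The points of `strips w h` from which a small step in the direction `u` stays in it. -/
def halfOpenStrips (w : κ → E →L[ℝ] ℝ) (h : κ → ℝ) (u : E) : Set E :=
  {p | ∀ j, w j p ∈ halfOpenInterval (w j u) (h j)}

lemma halfOpenStrips_subset (u : E) : halfOpenStrips w h u ⊆ strips w h :=
  fun _ hp j ↦ abs_le.2 (halfOpenInterval_subset_Icc _ _ (hp j))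

open Topology Filter in
lemma eventually_add_smul_mem_strips [Finite κ] {u : E} (hu : ∀ j, w j u ≠ 0) (q : E) :
    ∀ᶠ ε in 𝓝[>] (0 : ℝ), (q + ε • u ∈ strips w h → q ∈ halfOpenStrips w h u) ∧
      (q ∈ halfOpenStrips w h u → q + ε • u ∈ interior (strips w h)) := by
  have := eventually_all.2 fun j ↦ eventually_add_smul_mem_halfOpenInterval (hu j) (w j q) (h j)
  filter_upwards [this] with ε hε
  refine ⟨fun hq j ↦ (hε j).1 ?_, fun hq ↦ mem_interior_strips fun j ↦ ?_⟩
  · simpa using hq j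
  · simpa using (hε j).2 (hq j)

end Strips

section Cover

variable {ι E : Type*} [NormedAddCommGroup E] {x : ι → E} {S T : Set E}

/-- The number of translates `S + x i` containing `p`, with the value `0` if there are infinitely
many. -/
noncomputable def cover (x : ι → E) (S : Set E) (p : E) : ℕ := {i | p - x i ∈ S}.ncard

/-- The number of indices at which the family `x` takes the value `p`. It is an integer so that
differences can be taken. -/
noncomputable def translateMultiplicity (x : ι → E) (p : E) : ℤ := cover x {0} p

lemma cover_singleton (x : ι → E) (a p : E) :
    (cover x {a} p : ℤ) = translateMultiplicity x (p - a) := by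
  simp only [translateMultiplicity, cover, Set.mem_singleton_iff, sub_right_comm p a,
    sub_eq_zero]

lemma finite_setOf_sub_mem (hx : ∀ R, {i | ‖x i‖ ≤ R}.Finite) (hS : Bornology.IsBounded S)
    (p : E) : {i | p - x i ∈ S}.Finite := by
  obtain ⟨R, hR⟩ := isBounded_iff_forall_norm_le.1 hS
  refine (hx (‖p‖ + R)).subset fun i hi ↦ ?_
  calc ‖x i‖ = ‖p - (p - x i)‖ := by rw [sub_sub_cancel]
    _ ≤ ‖p‖ + R := (norm_sub_le _ _).trans (by gcongr; exact hR _ hi)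

lemma cover_union (hx : ∀ R, {i | ‖x i‖ ≤ R}.Finite) (hS : Bornology.IsBounded S)
    (hT : Bornology.IsBounded T) (hST : Disjoint S T) (p : E) :
    cover x (S ∪ T) p = cover x S p + cover x T p :=
  Set.ncard_union_eq (hST.preimage fun i ↦ p - x i) (finite_setOf_sub_mem hx hS p)
    (finite_setOf_sub_mem hx hT p)

lemma finite_inter_support_translateMultiplicity (hx : ∀ R, {i | ‖x i‖ ≤ R}.Finite)
    (hS : Bornology.IsBounded S) : (S ∩ Function.support (translateMultiplicity x)).Finite := by
  obtain ⟨R, hR⟩ := isBounded_iff_forall_norm_le.1 hS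
  refine ((hx R).image x).subset fun p ⟨hpS, hp⟩ ↦ ?_
  obtain ⟨i, hi⟩ := Set.nonempty_of_ncard_ne_zero (Int.natCast_ne_zero.1 hp)
  obtain rfl := sub_eq_zero.1 (Set.mem_singleton_iff.1 hi)
  exact ⟨i, hR _ hpS, rfl⟩

end Cover

namespace IsKFoldTranslativeTiling

variable {ι : Type} {K : Set (ℝ × ℝ)} {x : ι → ℝ × ℝ} {k : ℕ}

lemma le_cover (hT : IsKFoldTranslativeTiling K x k) (hK : Bornology.IsBounded K) (p : ℝ × ℝ) :
    k ≤ cover x K p := by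
  obtain ⟨s, hks, hs⟩ := hT.2.1 p
  refine hks.trans ?_
  rw [← Set.ncard_coe_finset]
  exact Set.ncard_le_ncard hs (finite_setOf_sub_mem hT.1 hK p)

lemma cover_interior_le (hT : IsKFoldTranslativeTiling K x k) (p : ℝ × ℝ) :
    cover x (interior K) p ≤ k := by
  by_cases hfin : {i | p - x i ∈ interior K}.Finite
  · rw [cover, Set.ncard_eq_toFinset_card _ hfin]
    exact hT.2.2 p _ fun i hi ↦ hfin.mem_toFinset.1 hi
  · simp [cover, Set.Infinite.ncard hfin]

lemma isBoundedLocallyFinite_translateMultiplicity (hT : IsKFoldTranslativeTiling K x k)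
    (hK : Bornology.IsBounded K) (hne : (interior K).Nonempty) :
    IsBoundedLocallyFinite (translateMultiplicity x) where
  exists_abs_le := by
    obtain ⟨q, hq⟩ := hne
    refine ⟨k, fun p ↦ ?_⟩
    rw [translateMultiplicity, Nat.abs_cast, Nat.cast_le]
    refine le_trans (Set.ncard_le_ncard (fun i hi ↦ ?_) ?_) (hT.cover_interior_le (p + q))
    · obtain rfl := sub_eq_zero.1 (Set.mem_singleton_iff.1 hi)
      simpa using hq
    · exact finite_setOf_sub_mem hT.1 (hK.subset interior_subset) _
  finite_inter_support _ hS := finite_inter_support_translateMultiplicity hT.1 hS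

/-- With `x i` each `x i + t` is also in the family, and the interiors at all of them contain
`x i + q`. -/
theorem card_le_of_subset_periods (hT : IsKFoldTranslativeTiling K x k) (hk : 0 < k)
    {T : Finset (ℝ × ℝ)} (hper : ∀ t ∈ T, t ∈ periods (translateMultiplicity x)) {q : ℝ × ℝ}
    (hq : ∀ t ∈ T, q - t ∈ interior K) : T.card ≤ k := by
  obtain ⟨s, hks, -⟩ := hT.2.1 0
  obtain ⟨i, -⟩ := Finset.card_pos.1 (hk.trans_le hks)
  have hi : translateMultiplicity x (x i) ≠ 0 := Int.natCast_ne_zero.2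
    (Set.ncard_ne_zero_of_mem (a := i) (sub_self (x i))
      (finite_setOf_sub_mem hT.1 Bornology.isBounded_singleton _))
  have translate (t : ℝ × ℝ) (ht : t ∈ T) : ∃ j, x j = x i + t := by
    have hne : translateMultiplicity x (x i + t) ≠ 0 := by rwa [hper t ht]
    obtain ⟨j, hj⟩ := Set.nonempty_of_ncard_ne_zero (Int.natCast_ne_zero.1 hne)
    exact ⟨j, (sub_eq_zero.1 (Set.mem_singleton_iff.1 hj)).symm⟩
  have : Nonempty ι := ⟨i⟩
  choose! f hf using translate
  have hinj : Set.InjOn f T := fun t ht t' ht' htt' ↦ by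
    rw [← add_right_inj (x i), ← hf t ht, htt', hf t' ht']
  classical
  rw [← Finset.card_image_of_injOn hinj]
  refine hT.2.2 (x i + q) _ (Finset.forall_mem_image.2 fun t ht ↦ ?_)
  rw [hf t ht, add_sub_add_left_eq_sub]
  exact hq t ht

variable {κ : Type*} [Finite κ] {w : κ → ℝ × ℝ →L[ℝ] ℝ} {h : κ → ℝ}

open Topology Filter in
/-- A small step in the direction `u` moves exactly the half-open translates containing `p` into
the interior, and no others into the closed translates. -/
theorem cover_halfOpenStrips (hT : IsKFoldTranslativeTiling (strips w h) x k)
    (hK : Bornology.IsBounded (strips w h)) {u : ℝ × ℝ} (hu : ∀ j, w j u ≠ 0) (p : ℝ × ℝ) :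
    cover x (halfOpenStrips w h u) p = k := by
  obtain ⟨R, hR⟩ := isBounded_iff_forall_norm_le.1 hK
  set F := {i | p - x i ∈ Metric.closedBall 0 (R + ‖u‖)}
  have hF : F.Finite := finite_setOf_sub_mem hT.1 Metric.isBounded_closedBall p
  have small_step : ∀ᶠ ε in 𝓝[>] (0 : ℝ), ε < 1 := nhdsWithin_le_nhds (eventually_lt_nhds one_pos)
  obtain ⟨ε, hε, hε₁, hε₀⟩ := (((eventually_all_finite hF).2 fun i _ ↦
    eventually_add_smul_mem_strips hu (p - x i)).and
      (small_step.and self_mem_nhdsWithin)).exists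
  simp_rw [← add_sub_right_comm] at hε
  apply le_antisymm
  · refine le_trans (Set.ncard_le_ncard (fun i hi ↦ (hε i ?_).2 hi)
      (finite_setOf_sub_mem hT.1 (hK.subset interior_subset) _)) (hT.cover_interior_le (p + ε • u))
    exact mem_closedBall_zero_iff.2 ((hR _ (halfOpenStrips_subset u hi)).trans
      (le_add_of_nonneg_right (norm_nonneg u)))
  · refine (hT.le_cover hK (p + ε • u)).trans (Set.ncard_le_ncard (fun i hi ↦ (hε i ?_).1 hi)
      (finite_setOf_sub_mem hT.1 (hK.subset (halfOpenStrips_subset u)) _))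
    refine mem_closedBall_zero_iff.2 ?_
    calc ‖p - x i‖ = ‖(p + ε • u - x i) - ε • u‖ := by congr 1; abel
      _ ≤ R + ε * ‖u‖ := by
        refine (norm_sub_le _ _).trans (add_le_add (hR _ hi) ?_)
        rw [norm_smul, Real.norm_of_nonneg (le_of_lt hε₀)]
      _ ≤ R + ‖u‖ := by gcongr; exact mul_le_of_le_one_left (norm_nonneg u) hε₁.le

end IsKFoldTranslativeTiling

section HalfOpenInterval

lemma halfOpenInterval_congr {s s' : ℝ} (hs : SignType.sign s = SignType.sign s') (h : ℝ) :
    halfOpenInterval s h = halfOpenInterval s' h := by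
  have : 0 < s ↔ 0 < s' := by rw [← sign_eq_one_iff, hs, sign_eq_one_iff]
  simp only [halfOpenInterval, this]

lemma neg_mem_halfOpenInterval {s : ℝ} (hs : s ≠ 0) {h y : ℝ} :
    -y ∈ halfOpenInterval (-s) h ↔ y ∈ halfOpenInterval s h := by
  rcases hs.lt_or_gt with hs | hs
  · rw [halfOpenInterval, halfOpenInterval, if_pos (neg_pos.2 hs), if_neg hs.not_gt, Set.mem_Ico,
      Set.mem_Ioc, neg_le_neg_iff, neg_lt, and_comm]
  · rw [halfOpenInterval, halfOpenInterval, if_neg (neg_lt_zero.2 hs).not_gt, if_pos hs,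
      Set.mem_Ico, Set.mem_Ioc, neg_lt_neg_iff, neg_le, and_comm]

variable {y s h t : ℝ}

lemma add_mul_mem_halfOpenInterval (hs : s ≠ 0) (hy : |y| ≤ h) (hys : |y + s| ≤ h) (ht₀ : 0 ≤ t)
    (ht₁ : t < 1) : y + t * s ∈ halfOpenInterval s h := by
  rw [abs_le] at hy hys
  rw [halfOpenInterval]
  rcases hs.lt_or_gt with hs | hs
  · rw [if_neg hs.not_gt]
    constructor <;> nlinarith
  · rw [if_pos hs]
    constructor <;> nlinarith

lemma nonneg_of_add_mul_mem_halfOpenInterval (hs : s ≠ 0) (hy : |y| = h) (hys : |y + s| ≤ h)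
    (ht : y + t * s ∈ halfOpenInterval s h) : 0 ≤ t := by
  rw [abs_le] at hys
  have := abs_le.1 (abs_le.2 (halfOpenInterval_subset_Icc s h ht))
  by_contra! hlt
  rcases hs.lt_or_gt with hs | hs <;> rcases eq_or_eq_neg_of_abs_eq hy with rfl | rfl <;> nlinarith

lemma lt_one_of_add_mul_mem_halfOpenInterval (hs : s ≠ 0) (hy : |y| ≤ h) (hys : |y + s| = h)
    (ht : y + t * s ∈ halfOpenInterval s h) : t < 1 := by
  rw [abs_le] at hy
  rw [halfOpenInterval] at ht
  by_contra! hle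
  rcases hs.lt_or_gt with hs | hs
  · rw [if_neg hs.not_gt] at ht
    rcases eq_or_eq_neg_of_abs_eq hys with hys | hys <;> nlinarith [ht.1, ht.2]
  · rw [if_pos hs] at ht
    rcases eq_or_eq_neg_of_abs_eq hys with hys | hys <;> nlinarith [ht.1, ht.2]

end HalfOpenInterval

section HalfOpenSegment

variable {E : Type*} [NormedAddCommGroup E] [NormedSpace ℝ E] {a b : E}

/-- The segment from `a` to `b` without its endpoint `b`. -/
def halfOpenSegment (a b : E) : Set E := AffineMap.lineMap a b '' Set.Ico (0 : ℝ) 1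

lemma mem_halfOpenSegment {q : E} :
    q ∈ halfOpenSegment a b ↔ ∃ t : ℝ, (0 ≤ t ∧ t < 1) ∧ a + t • (b - a) = q := by
  simp only [halfOpenSegment, Set.mem_image, Set.mem_Ico, AffineMap.lineMap_apply_module', add_comm]

lemma halfOpenSegment_union_right (a b : E) : halfOpenSegment a b ∪ {b} = segment ℝ a b := by
  rw [segment_eq_image_lineMap, ← Set.Ico_insert_right zero_le_one, Set.image_insert_eq,
    AffineMap.lineMap_apply_one, Set.union_singleton, halfOpenSegment]

lemma right_notMem_halfOpenSegment (hab : a ≠ b) : b ∉ halfOpenSegment a b := by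
  rintro ⟨t, ht, htb⟩
  exact ht.2.ne (by simpa [hab] using htb)

lemma neg_halfOpenSegment (a b : E) : -halfOpenSegment a b = halfOpenSegment (-a) (-b) := by
  ext q
  simp only [Set.mem_neg, mem_halfOpenSegment]
  refine exists_congr fun t ↦ and_congr_right fun _ ↦ ?_
  rw [← neg_eq_iff_eq_neg, show -(a + t • (b - a)) = -a + t • (-b - -a) by module]

lemma cover_segment {ι : Type*} {x : ι → E} (hx : ∀ R, {i | ‖x i‖ ≤ R}.Finite) (hab : a ≠ b)
    (p : E) : cover x (segment ℝ a b) p = cover x (halfOpenSegment a b) p + cover x {b} p := by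
  have hbd : Bornology.IsBounded (segment ℝ a b) := by
    rw [← convexHull_pair]
    exact ((Set.toFinite {a, b}).isCompact_convexHull ℝ).isBounded
  rw [← halfOpenSegment_union_right] at hbd ⊢
  exact cover_union hx (hbd.subset Set.subset_union_left) Bornology.isBounded_singleton
    (Set.disjoint_singleton_right.2 (right_notMem_halfOpenSegment hab)) p

end HalfOpenSegment

section StripEdge

variable {κ E : Type*} [NormedAddCommGroup E] [NormedSpace ℝ E]

/-- The part of the polygon `halfOpenStrips w h u`, for `u` close to the direction `e` of its `i`-th
pair of edges, at the level `s` of the `i`-th normal. -/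
def halfOpenFacet (w : κ → E →L[ℝ] ℝ) (h : κ → ℝ) (i : κ) (e : E) (s : ℝ) : Set E :=
  {q | (∀ j ≠ i, w j q ∈ halfOpenInterval (w j e) (h j)) ∧ w i q = s}

/-- The segment `[a, b]` is the edge of `strips w h` on the line `w i = -h i`. That `a` and `b` are
its ends is encoded by a further strip boundary through each of them. -/
structure IsStripEdge (w : κ → E →L[ℝ] ℝ) (h : κ → ℝ) (i : κ) (a b : E) : Prop where
  left_mem : a ∈ strips w h
  right_mem : b ∈ strips w h
  apply_left : w i a = -h i
  apply_right : w i b = -h i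
  apply_sub_ne_zero : ∀ j ≠ i, w j (b - a) ≠ 0
  exists_tight_left : ∃ j ≠ i, |w j a| = h j
  exists_tight_right : ∃ j ≠ i, |w j b| = h j

variable {w : κ → E →L[ℝ] ℝ} {h : κ → ℝ} {i : κ} {a b e : E}

lemma neg_halfOpenFacet (he : ∀ j ≠ i, w j e ≠ 0) (s : ℝ) :
    -halfOpenFacet w h i e s = halfOpenFacet w h i (-e) (-s) := by
  ext q
  refine and_congr (forall₂_congr fun j hj ↦ ?_) ?_
  · rw [← neg_mem_halfOpenInterval (he j hj), map_neg, map_neg, neg_neg]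
  · rw [map_neg, neg_eq_iff_eq_neg]

namespace IsStripEdge

lemma symm (hE : IsStripEdge w h i a b) : IsStripEdge w h i b a where
  left_mem := hE.right_mem
  right_mem := hE.left_mem
  apply_left := hE.apply_right
  apply_right := hE.apply_left
  apply_sub_ne_zero j hj := by
    rw [← neg_sub, map_neg]
    exact neg_ne_zero.2 (hE.apply_sub_ne_zero j hj)
  exists_tight_left := hE.exists_tight_right
  exists_tight_right := hE.exists_tight_left

lemma apply_sub (hE : IsStripEdge w h i a b) : w i (b - a) = 0 := by
  rw [map_sub, hE.apply_left, hE.apply_right, sub_self]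

lemma ne (hE : IsStripEdge w h i a b) : a ≠ b := by
  obtain ⟨j, hj, -⟩ := hE.exists_tight_left
  rintro rfl
  exact hE.apply_sub_ne_zero j hj (by simp)

lemma exists_smul_sub_eq (hE : IsStripEdge w h i a b) (hdim : Module.finrank ℝ E = 2)
    (hi : w i ≠ 0) {v : E} (hv : w i v = 0) : ∃ t : ℝ, t • (b - a) = v := by
  have : FiniteDimensional ℝ E := .of_finrank_pos (by omega)
  have hker : Module.finrank ℝ (LinearMap.ker (w i).toLinearMap) = 1 := by
    have := Module.Dual.finrank_ker_add_one_of_ne_zero (f := (w i).toLinearMap)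
      fun h0 ↦ hi (ContinuousLinearMap.coe_injective h0)
    omega
  let e : LinearMap.ker (w i).toLinearMap := ⟨b - a, hE.apply_sub⟩
  obtain ⟨t, ht⟩ := exists_smul_eq_of_finrank_eq_one hker (x := e)
    (fun h0 ↦ hE.ne (sub_eq_zero.1 (congrArg Subtype.val h0)).symm) ⟨v, hv⟩
  exact ⟨t, congrArg Subtype.val ht⟩

lemma left_mem_extremePoints (hE : IsStripEdge w h i a b) (hdim : Module.finrank ℝ E = 2)
    (hi : w i ≠ 0) : a ∈ Set.extremePoints ℝ (strips w h) := by
  refine mem_extremePoints_strips hE.left_mem fun v hv ↦ ?_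
  have habs : |w i a| = h i := by
    rw [hE.apply_left, abs_neg, abs_of_nonneg ((abs_nonneg _).trans (hE.left_mem i))]
  obtain ⟨t, rfl⟩ := hE.exists_smul_sub_eq hdim hi (hv i habs)
  obtain ⟨j, hj, hja⟩ := hE.exists_tight_left
  have := hv j hja
  rw [map_smul, smul_eq_mul, mul_eq_zero] at this
  rw [this.resolve_right (hE.apply_sub_ne_zero j hj), zero_smul]

lemma halfOpenFacet_eq (hE : IsStripEdge w h i a b) (hdim : Module.finrank ℝ E = 2)
    (hi : w i ≠ 0) : halfOpenFacet w h i (b - a) (-h i) = halfOpenSegment a b := by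
  have apply_add (j : κ) (t : ℝ) : w j (a + t • (b - a)) = w j a + t * w j (b - a) := by simp
  have apply_b (j : κ) : w j a + w j (b - a) = w j b := by simp
  ext q
  rw [mem_halfOpenSegment]
  constructor
  · rintro ⟨hq, hqi⟩
    obtain ⟨t, ht⟩ := hE.exists_smul_sub_eq hdim hi (v := q - a) (by simp [hqi, hE.apply_left])
    obtain rfl := add_eq_of_eq_sub' ht
    simp only [apply_add] at hq
    obtain ⟨j, hj, hja⟩ := hE.exists_tight_left
    obtain ⟨j', hj', hjb⟩ := hE.exists_tight_right
    refine ⟨t, ⟨nonneg_of_add_mul_mem_halfOpenInterval (hE.apply_sub_ne_zero j hj) hja ?_ (hq j hj),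
      lt_one_of_add_mul_mem_halfOpenInterval (hE.apply_sub_ne_zero j' hj') (hE.left_mem j') ?_
        (hq j' hj')⟩, rfl⟩
    · rw [apply_b]
      exact hE.right_mem j
    · rw [apply_b, hjb]
  · rintro ⟨t, ⟨ht₀, ht₁⟩, rfl⟩
    refine ⟨fun j hj ↦ ?_, ?_⟩
    · rw [apply_add]
      refine add_mul_mem_halfOpenInterval (hE.apply_sub_ne_zero j hj) (hE.left_mem j) ?_ ht₀ ht₁
      rw [apply_b]
      exact hE.right_mem j
    · rw [apply_add, hE.apply_sub, hE.apply_left, mul_zero, add_zero]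

end IsStripEdge

end StripEdge

namespace IsKFoldTranslativeTiling

variable {ι κ : Type} {x : ι → ℝ × ℝ} {k : ℕ} [Finite κ] {w : κ → ℝ × ℝ →L[ℝ] ℝ} {h : κ → ℝ}
  {i : κ} {e : ℝ × ℝ}

open Topology Filter in
lemma cover_of_perturbed_direction (hT : IsKFoldTranslativeTiling (strips w h) x k)
    (hK : Bornology.IsBounded (strips w h)) (hei : w i e = 0) (he : ∀ j ≠ i, w j e ≠ 0)
    {v : ℝ × ℝ} (hv : w i v ≠ 0) (p : ℝ × ℝ) :
    cover x {q | (∀ j ≠ i, w j q ∈ halfOpenInterval (w j e) (h j)) ∧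
      w i q ∈ halfOpenInterval (w i v) (h i)} p = k := by
  have same_sign : ∀ᶠ ε in 𝓝[>] (0 : ℝ), ∀ j, j ≠ i →
      SignType.sign (w j (e + ε • v)) = SignType.sign (w j e) := by
    refine eventually_all.2 fun j ↦ eventually_imp_distrib_left.2 fun hj ↦ ?_
    have hlim : Tendsto (fun ε : ℝ ↦ w j (e + ε • v)) (𝓝[>] 0) (𝓝 (w j e)) :=
      tendsto_nhdsWithin_of_tendsto_nhds (Continuous.tendsto' (by fun_prop) _ _ (by simp))
    have := (continuousAt_sign_of_ne_zero (he j hj)).tendsto.comp hlim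
    rwa [nhds_discrete, tendsto_pure] at this
  obtain ⟨ε, hε, hε₀ : 0 < ε⟩ := (same_sign.and self_mem_nhdsWithin).exists
  have hεi : SignType.sign (w i (e + ε • v)) = SignType.sign (w i v) := by
    simp [hei, sign_mul, sign_pos hε₀]
  have transversal (j : κ) : w j (e + ε • v) ≠ 0 := by
    rw [← sign_ne_zero]
    rcases eq_or_ne j i with rfl | hj
    · rwa [hεi, sign_ne_zero]
    · rw [hε j hj, sign_ne_zero]
      exact he j hj
  rw [← hT.cover_halfOpenStrips hK transversal p]
  congr 1
  ext q
  constructor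
  · rintro ⟨hq, hqi⟩ j
    rcases eq_or_ne j i with rfl | hj
    · rwa [halfOpenInterval_congr hεi]
    · rw [halfOpenInterval_congr (hε j hj)]
      exact hq j hj
  · refine fun hq ↦ ⟨fun j hj ↦ ?_, ?_⟩
    · rw [← halfOpenInterval_congr (hε j hj)]
      exact hq j
    · rw [← halfOpenInterval_congr hεi]
      exact hq i

lemma cover_halfOpenFacet_eq (hT : IsKFoldTranslativeTiling (strips w h) x k)
    (hK : Bornology.IsBounded (strips w h)) (hh : 0 < h i) (hei : w i e = 0)
    (he : ∀ j ≠ i, w j e ≠ 0) {v : ℝ × ℝ} (hv : 0 < w i v) (p : ℝ × ℝ) :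
    cover x (halfOpenFacet w h i e (-h i)) p = cover x (halfOpenFacet w h i e (h i)) p := by
  let Q : Set ℝ → Set (ℝ × ℝ) := fun A ↦
    {q | (∀ j ≠ i, w j q ∈ halfOpenInterval (w j e) (h j)) ∧ w i q ∈ A}
  have hQ {A : Set ℝ} (hA : A ⊆ Set.Icc (-h i) (h i)) : Bornology.IsBounded (Q A) := by
    refine hK.subset fun q hq j ↦ abs_le.2 ?_
    rcases eq_or_ne j i with rfl | hj
    exacts [hA hq.2, halfOpenInterval_subset_Icc _ _ (hq.1 j hj)]
  have cover_Q_union {A B : Set ℝ} (hA : A ⊆ Set.Icc (-h i) (h i))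
      (hB : B ⊆ Set.Icc (-h i) (h i)) (hAB : Disjoint A B) :
      cover x (Q (A ∪ B)) p = cover x (Q A) p + cover x (Q B) p := by
    rw [← cover_union hT.1 (hQ hA) (hQ hB)]
    · congr 1
      ext q
      exact and_or_left
    · exact (hAB.preimage (w i)).mono (fun _ hq ↦ hq.2) fun _ hq ↦ hq.2
  have left := hT.cover_of_perturbed_direction hK hei he hv.ne' p
  have right := hT.cover_of_perturbed_direction hK hei he (v := -v) (by simpa using hv.ne') p
  rw [halfOpenInterval, if_pos hv, ← Set.Ioo_union_left (neg_lt_self hh)] at left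
  rw [halfOpenInterval, if_neg (by simpa using hv.le), ← Set.Ioo_union_right (neg_lt_self hh)]
    at right
  have h₁ := cover_Q_union Set.Ioo_subset_Icc_self (B := {-h i}) (by simp [hh.le]) (by simp)
  have h₂ := cover_Q_union Set.Ioo_subset_Icc_self (B := {h i}) (by simp [hh.le]) (by simp)
  exact add_left_cancel (h₁.symm.trans ((left.trans right.symm).trans h₂))

/-- Half-open edges balance with their opposites for both orientations, and the contributions of
the closed edges cancel. -/
lemma cover_singleton_add_cover_singleton_neg (hT : IsKFoldTranslativeTiling (strips w h) x k)
    (hK : Bornology.IsBounded (strips w h)) (hh : 0 < h i) {a b : ℝ × ℝ}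
    (hE : IsStripEdge w h i a b) (p : ℝ × ℝ) :
    cover x {a} p + cover x {-a} p = cover x {b} p + cover x {-b} p := by
  have hi : w i ≠ 0 := fun h0 ↦ hh.ne' (by simpa [h0] using hE.apply_left)
  have half_edges {a b : ℝ × ℝ} (hE : IsStripEdge w h i a b) :
      cover x (halfOpenSegment a b) p = cover x (halfOpenSegment (-b) (-a)) p := by
    have opposite : halfOpenFacet w h i (b - a) (h i) = halfOpenSegment (-b) (-a) := by
      rw [← neg_halfOpenSegment, ← hE.symm.halfOpenFacet_eq (by simp) hi,
        neg_halfOpenFacet hE.symm.apply_sub_ne_zero, neg_sub, neg_neg]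
    rw [← opposite, ← hE.halfOpenFacet_eq (by simp) hi]
    exact hT.cover_halfOpenFacet_eq hK hh hE.apply_sub hE.apply_sub_ne_zero (v := -a)
      (by rwa [map_neg, hE.apply_left, neg_neg]) p
  have h₁ := cover_segment hT.1 hE.ne p
  have h₂ := cover_segment hT.1 hE.symm.ne p
  have h₃ := cover_segment hT.1 (neg_injective.ne hE.ne) p
  have h₄ := cover_segment hT.1 (neg_injective.ne hE.symm.ne) p
  rw [segment_symm] at h₂ h₄
  have h₅ := half_edges hE
  have h₆ := half_edges hE.symm
  omega

theorem fwdDiff_fwdDiff_translateMultiplicity (hT : IsKFoldTranslativeTiling (strips w h) x k)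
    (hK : Bornology.IsBounded (strips w h)) (hh : 0 < h i) {a b : ℝ × ℝ}
    (hE : IsStripEdge w h i a b) :
    Δ_[b - a] (Δ_[a + b] (translateMultiplicity x)) = 0 := by
  ext q
  have balance := congrArg ((↑) : ℕ → ℤ)
    (hT.cover_singleton_add_cover_singleton_neg hK hh hE (q + b))
  push_cast [cover_singleton] at balance
  simp only [fwdDiff, Pi.zero_apply]
  rw [show q + (b - a) + (a + b) = q + b - -b by abel, show q + (b - a) = q + b - a by abel,
    show q + (a + b) = q + b - -a by abel]
  rw [add_sub_cancel_right q b] at balance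
  linarith

end IsKFoldTranslativeTiling

section TrapezoidStack

/-- The inclusion of the integer lattice in the plane. -/
def latticePoint (z : ℤ × ℤ) : ℝ × ℝ := (z.1, z.2)

lemma latticePoint_injective : Function.Injective latticePoint :=
  Int.cast_injective.prodMap Int.cast_injective

lemma snd_latticePoint (z : ℤ × ℤ) : (latticePoint z).2 = z.2 := rfl

variable {P : Set (ℝ × ℝ)} {a : ℤ} {n : ℕ} {l r : Fin (n + 1) → ℝ}

/-- The first coordinate of the polygonal chain through the points `(c i, i)`, at height `i + t`. -/
noncomputable def chainAt (c : Fin (n + 1) → ℝ) (i : Fin n) (t : ℝ) : ℝ :=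
  AffineMap.lineMap (c i.castSucc) (c i.succ) t

/-- `P` lies between the heights `a` and `a + n`, and between consecutive integer heights it lies in
the trapezoid whose horizontal sides join `l i` to `r i`, where the ends of these sides are in `P`.
A convex such `P` is the union of these trapezoids. -/
structure IsTrapezoidStack (P : Set (ℝ × ℝ)) (a : ℤ) {n : ℕ} (l r : Fin (n + 1) → ℝ) : Prop where
  left_mem : ∀ i, (l i, (a + i : ℝ)) ∈ P
  right_mem : ∀ i, (r i, (a + i : ℝ)) ∈ P
  snd_mem : ∀ p ∈ P, p.2 ∈ Set.Icc (a : ℝ) (a + n)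
  fst_mem : ∀ (i : Fin n), ∀ t ∈ Set.Icc (0 : ℝ) 1, ∀ x, (x, a + i + t) ∈ P →
    x ∈ Set.Icc (chainAt l i t) (chainAt r i t)

lemma chainAt_mem_of_convex {C : Set (ℝ × ℝ)} (hC : Convex ℝ C) {c : Fin (n + 1) → ℝ}
    (hc : ∀ i, (c i, (a + i : ℝ)) ∈ C) (i : Fin n) {t : ℝ} (ht : t ∈ Set.Icc (0 : ℝ) 1) :
    (chainAt c i t, a + i + t) ∈ C := by
  convert hC.lineMap_mem (hc i.castSucc) (hc i.succ) ht using 1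
  ext
  · simp [chainAt]
  · simp only [AffineMap.lineMap_apply_module', Fin.val_castSucc, Fin.val_succ, Prod.snd_add,
      Prod.smul_snd, Prod.snd_sub, smul_eq_mul]
    push_cast
    ring

lemma mem_of_convex_of_mem_Icc {C : Set (ℝ × ℝ)} (hC : Convex ℝ C)
    (hl : ∀ i, (l i, (a + i : ℝ)) ∈ C) (hr : ∀ i, (r i, (a + i : ℝ)) ∈ C) (i : Fin n) {t x : ℝ}
    (ht : t ∈ Set.Icc (0 : ℝ) 1)
    (hx : x ∈ Set.Icc (chainAt l i t) (chainAt r i t)) : (x, a + i + t) ∈ C := by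
  refine hC.segment_subset (chainAt_mem_of_convex hC hl i ht) (chainAt_mem_of_convex hC hr i ht) ?_
  rw [← Prod.image_mk_segment_left, segment_eq_Icc (hx.1.trans hx.2)]
  exact ⟨x, hx, rfl⟩

namespace IsTrapezoidStack

theorem subset_of_convex (hP : IsTrapezoidStack P a l r) (hn : 0 < n) {C : Set (ℝ × ℝ)}
    (hC : Convex ℝ C) (hl : ∀ i, (l i, (a + i : ℝ)) ∈ C) (hr : ∀ i, (r i, (a + i : ℝ)) ∈ C) :
    P ⊆ C := by
  intro p hp
  obtain ⟨hpa, hpn⟩ := hP.snd_mem p hp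
  obtain ⟨i, t, ht, hpt⟩ : ∃ (i : Fin n) (t : ℝ), t ∈ Set.Icc (0 : ℝ) 1 ∧ p.2 = a + i + t := by
    rcases hpn.eq_or_lt with hpn | hpn
    · refine ⟨⟨n - 1, by omega⟩, 1, by simp, ?_⟩
      rw [hpn, Nat.cast_pred hn]
      ring
    · have hfloor := (Nat.floor_lt (sub_nonneg.2 hpa)).2 (sub_lt_iff_lt_add'.2 hpn)
      have h₁ := Nat.floor_le (sub_nonneg.2 hpa)
      have h₂ := Nat.lt_floor_add_one (p.2 - a)
      exact ⟨⟨_, hfloor⟩, p.2 - a - ⌊p.2 - a⌋₊, ⟨by linarith, by linarith⟩, by simp⟩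
  obtain ⟨x, y⟩ := p
  obtain rfl : y = a + i + t := hpt
  exact mem_of_convex_of_mem_Icc hC hl hr i ht (hP.fst_mem i t ht x hp)

end IsTrapezoidStack

/-- The lattice points `z` for which `p - z` lies in the stack of trapezoids without its right and
top edges. -/
noncomputable def stackTranslates (a : ℤ) {n : ℕ} (l r : Fin (n + 1) → ℝ) (p : ℝ × ℝ) :
    Finset (ℤ × ℤ) :=
  (Finset.univ.sigma fun i : Fin n ↦
    Finset.Ioc ⌊p.1 - chainAt r i (Int.fract p.2)⌋
      ⌊p.1 - chainAt l i (Int.fract p.2)⌋).image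
    fun z ↦ (z.2, ⌊p.2⌋ - a - z.1)

lemma mem_stackTranslates {p : ℝ × ℝ} {z : ℤ × ℤ} :
    z ∈ stackTranslates a l r p ↔ ∃ i : Fin n, ⌊p.2⌋ - a - i = z.2 ∧
      p.1 - z.1 ∈ Set.Ico (chainAt l i (Int.fract p.2)) (chainAt r i (Int.fract p.2)) := by
  simp only [stackTranslates, Finset.mem_image, Finset.mem_sigma, Finset.mem_univ, true_and,
    Finset.mem_Ioc, Int.floor_lt, Int.le_floor, Sigma.exists, Set.mem_Ico, Prod.ext_iff]
  refine exists_congr fun i ↦ ⟨?_, ?_⟩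
  · rintro ⟨m, ⟨h₁, h₂⟩, rfl, hz⟩
    exact ⟨hz, by linarith, by linarith⟩
  · rintro ⟨hz, h₁, h₂⟩
    exact ⟨z.1, ⟨by linarith, by linarith⟩, rfl, hz⟩

lemma sub_mem_of_mem_stackTranslates (hP : IsTrapezoidStack P a l r) (hconv : Convex ℝ P)
    {p : ℝ × ℝ} {z : ℤ × ℤ} (hz : z ∈ stackTranslates a l r p) : p - latticePoint z ∈ P := by
  obtain ⟨i, hi, hz⟩ := mem_stackTranslates.1 hz
  convert mem_of_convex_of_mem_Icc hconv hP.left_mem hP.right_mem i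
    ⟨Int.fract_nonneg p.2, (Int.fract_lt_one p.2).le⟩ (Set.Ico_subset_Icc_self hz) using 1
  ext
  · rfl
  · rw [Prod.snd_sub, snd_latticePoint, ← hi, Int.fract]
    push_cast
    ring

lemma exists_add_smul_mem_of_mem_interior {p : ℝ × ℝ} (hp : p ∈ interior P) (v : ℝ × ℝ) :
    ∃ ε > 0, p + (ε : ℝ) • v ∈ P := by
  have hcont : Filter.Tendsto (fun ε : ℝ ↦ p + ε • v) (nhdsWithin 0 (Set.Ioi 0)) (nhds p) :=
    tendsto_nhdsWithin_of_tendsto_nhds (Continuous.tendsto' (by fun_prop) _ _ (by simp))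
  obtain ⟨ε, hε, hε₀⟩ :=
    ((hcont.eventually (mem_interior_iff_mem_nhds.1 hp)).and self_mem_nhdsWithin).exists
  exact ⟨ε, hε₀, hε⟩

lemma mem_stackTranslates_of_sub_mem_interior (hP : IsTrapezoidStack P a l r) {p : ℝ × ℝ}
    {z : ℤ × ℤ} (hz : p - latticePoint z ∈ interior P) : z ∈ stackTranslates a l r p := by
  obtain ⟨δ, hδ, hup⟩ := exists_add_smul_mem_of_mem_interior hz (0, 1)
  obtain ⟨ε, hε, hright⟩ := exists_add_smul_mem_of_mem_interior hz (1, 0)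
  have hlow := (hP.snd_mem _ (interior_subset hz)).1
  have hhigh := (hP.snd_mem _ hup).2
  simp only [Prod.snd_sub, snd_latticePoint, Prod.snd_add, Prod.smul_snd, smul_eq_mul, mul_one]
    at hlow hhigh
  have hfloor : a + z.2 ≤ ⌊p.2⌋ := Int.le_floor.2 (by push_cast; linarith)
  have hfloor' : ⌊p.2⌋ < a + z.2 + n := Int.floor_lt.2 (by push_cast; linarith)
  obtain ⟨j, hj⟩ := Int.eq_ofNat_of_zero_le (show 0 ≤ ⌊p.2⌋ - a - z.2 by linarith)
  have hsnd : p.2 - z.2 = a + j + Int.fract p.2 := by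
    rw [Int.fract, ← Int.cast_natCast j, ← hj]
    push_cast
    ring
  have row (x : ℝ) (hx : (x, p.2 - z.2) ∈ P) := hP.fst_mem ⟨j, by omega⟩ (Int.fract p.2)
    ⟨Int.fract_nonneg _, (Int.fract_lt_one _).le⟩ x (hsnd ▸ hx)
  have hleft := row _ (interior_subset hz)
  have hright := row (p.1 - z.1 + ε) (by convert hright using 1; ext <;> simp [latticePoint])
  exact mem_stackTranslates.2 ⟨⟨j, by omega⟩, by simp [← hj], hleft.1, by linarith [hright.2]⟩

lemma card_stackTranslates (hP : IsTrapezoidStack P a l r) (hconv : Convex ℝ P) {σ : Fin n → Fin n}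
    (hσ : σ.Bijective) {d : Fin n → ℤ} (hbot : ∀ i, r (σ i).castSucc = l i.castSucc + d i)
    (htop : ∀ i, r (σ i).succ = l i.succ + d i) (p : ℝ × ℝ) :
    ((stackTranslates a l r p).card : ℤ) = ∑ i, d i := by
  set t := Int.fract p.2
  have ht : t ∈ Set.Icc (0 : ℝ) 1 := ⟨Int.fract_nonneg p.2, (Int.fract_lt_one p.2).le⟩
  have left_le_right (i : Fin n) : chainAt l i t ≤ chainAt r i t :=
    (hP.fst_mem i t ht _ (chainAt_mem_of_convex hconv hP.left_mem i ht)).2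
  have right_eq (i : Fin n) : chainAt r (σ i) t = chainAt l i t + d i := by
    simp only [chainAt, AffineMap.lineMap_apply_module', hbot, htop, smul_eq_mul]
    ring
  have hinj : Function.Injective fun z : (_ : Fin n) × ℤ ↦ (z.2, ⌊p.2⌋ - a - z.1) := by
    rintro ⟨i, m⟩ ⟨i', m'⟩ h
    obtain ⟨rfl, h⟩ := Prod.ext_iff.1 h
    obtain rfl : i = i' := Fin.ext (by simpa using h)
    rfl
  calc ((stackTranslates a l r p).card : ℤ)
      = ∑ i, (⌊p.1 - chainAt l i t⌋ - ⌊p.1 - chainAt r i t⌋) := by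
        rw [stackTranslates, Finset.card_image_of_injective _ hinj, Finset.card_sigma]
        push_cast [Int.card_Ioc]
        refine Finset.sum_congr rfl fun i _ ↦ Int.toNat_of_nonneg (sub_nonneg.2 ?_)
        exact Int.floor_le_floor (by linarith [left_le_right i])
    _ = ∑ i, (⌊p.1 - chainAt l i t⌋ - ⌊p.1 - chainAt r (σ i) t⌋) := by
        rw [Finset.sum_sub_distrib, Finset.sum_sub_distrib,
          hσ.sum_comp fun i ↦ ⌊p.1 - chainAt r i t⌋]
    _ = ∑ i, d i := by
        simp only [right_eq, ← sub_sub, Int.floor_sub_intCast, sub_sub_cancel]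

theorem isKFoldTranslativeTiling_of_isTrapezoidStack (hP : IsTrapezoidStack P a l r)
    (hconv : Convex ℝ P) {σ : Fin n → Fin n} (hσ : σ.Bijective) {d : Fin n → ℤ}
    (hbot : ∀ i, r (σ i).castSucc = l i.castSucc + d i)
    (htop : ∀ i, r (σ i).succ = l i.succ + d i) {k : ℕ} (hk : ∑ i, d i = k) :
    IsKFoldTranslativeTiling P latticePoint k := by
  have hcard (p : ℝ × ℝ) : (stackTranslates a l r p).card = k := by
    exact_mod_cast (card_stackTranslates hP hconv hσ hbot htop p).trans hk
  refine ⟨fun R ↦ ?_, fun p ↦ ⟨stackTranslates a l r p, (hcard p).ge, fun z hz ↦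
    sub_mem_of_mem_stackTranslates hP hconv hz⟩, fun p s hs ↦ (hcard p) ▸
      Finset.card_le_card fun z hz ↦ mem_stackTranslates_of_sub_mem_interior hP (hs z hz)⟩
  have := (isCompact_closedBall (0 : ℤ × ℤ) R).finite_of_discrete
  refine this.subset fun z hz ↦ mem_closedBall_zero_iff.2 ?_
  exact hz

end TrapezoidStack

section HalfBoundary

variable {m : ℕ}

/-- The points `v 0, …, v m = -v 0` are the consecutive vertices along one half of the boundary of
`strips w h`, where the edge from `v n` to `v (n + 1)` lies on the line `w n = -h n`. -/
structure IsHalfBoundary {E : Type*} [NormedAddCommGroup E] [NormedSpace ℝ E]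
    (w : Fin m → E →L[ℝ] ℝ) (h : Fin m → ℝ) (v : Fin (m + 1) → E) : Prop where
  last_eq : v (Fin.last m) = -v 0
  mem_strips : ∀ n, v n ∈ strips w h
  apply_castSucc : ∀ n, w n (v n.castSucc) = -h n
  apply_succ : ∀ n, w n (v n.succ) = -h n
  apply_sub_ne_zero : ∀ n, ∀ j ≠ n, w j (v n.succ - v n.castSucc) ≠ 0

/-- The values of `v` and their negatives. -/
def symmetricRange {G : Type*} [Neg G] [DecidableEq G] (v : Fin m → G) : Finset G :=
  Finset.univ.image v ∪ Finset.univ.image (-v)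

lemma mem_symmetricRange {G : Type*} [Neg G] [DecidableEq G] {v : Fin m → G} {p : G} :
    p ∈ symmetricRange v ↔ ∃ n, p = v n ∨ p = -v n := by
  simp [symmetricRange, exists_or, eq_comm]

lemma card_symmetricRange_comp {G H : Type*} [AddCommGroup G] [DecidableEq G] [AddCommGroup H]
    [DecidableEq H] {f : G →ₗ[ℤ] H} (hf : Function.Injective f) (v : Fin m → G) :
    (symmetricRange fun n ↦ f (v n)).card = (symmetricRange v).card := by
  rw [← Finset.card_image_of_injective _ hf]
  congr 1
  ext p
  simp only [Finset.mem_image, mem_symmetricRange]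
  constructor
  · rintro ⟨n, rfl | rfl⟩
    exacts [⟨v n, ⟨n, .inl rfl⟩, rfl⟩, ⟨-v n, ⟨n, .inr rfl⟩, map_neg f _⟩]
  · rintro ⟨_, ⟨n, rfl | rfl⟩, rfl⟩
    exacts [⟨n, .inl rfl⟩, ⟨n, .inr (map_neg f _)⟩]

namespace IsHalfBoundary

variable {E : Type*} [NormedAddCommGroup E] [NormedSpace ℝ E] {w : Fin m → E →L[ℝ] ℝ}
  {h : Fin m → ℝ} {v : Fin (m + 1) → E}

lemma abs_apply_castSucc (hv : IsHalfBoundary w h v) (n : Fin m) :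
    |w n (v n.castSucc)| = h n := by
  rw [hv.apply_castSucc, abs_neg, abs_of_nonneg ((abs_nonneg _).trans (hv.mem_strips 0 n))]

lemma abs_apply_succ (hv : IsHalfBoundary w h v) (n : Fin m) : |w n (v n.succ)| = h n := by
  rw [hv.apply_succ, ← hv.apply_castSucc, hv.abs_apply_castSucc]

lemma isStripEdge (hv : IsHalfBoundary w h v) (hm : 1 < m) (n : Fin m) :
    IsStripEdge w h n (v n.castSucc) (v n.succ) where
  left_mem := hv.mem_strips _
  right_mem := hv.mem_strips _
  apply_left := hv.apply_castSucc n
  apply_right := hv.apply_succ n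
  apply_sub_ne_zero := hv.apply_sub_ne_zero n
  exists_tight_left := by
    obtain ⟨m, rfl⟩ := Nat.exists_eq_add_of_lt hm
    cases n using Fin.cases with
    | zero =>
      refine ⟨Fin.last _, by simp [Fin.ext_iff], ?_⟩
      rw [← hv.abs_apply_succ, Fin.succ_last, hv.last_eq, map_neg, abs_neg, Fin.castSucc_zero]
    | succ i => exact ⟨i.castSucc, by simp [Fin.ext_iff], hv.abs_apply_succ i.castSucc⟩
  exists_tight_right := by
    obtain ⟨m, rfl⟩ := Nat.exists_eq_add_of_lt hm
    cases n using Fin.lastCases with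
    | last =>
      refine ⟨0, Fin.ne_of_val_ne (by rw [Fin.val_zero, Fin.val_last]; omega), ?_⟩
      rw [← hv.abs_apply_castSucc, Fin.succ_last, hv.last_eq, map_neg, abs_neg, Fin.castSucc_zero]
    | cast i => exact ⟨i.succ, by simp [Fin.ext_iff], hv.abs_apply_castSucc i.succ⟩

lemma convexHull_subset [DecidableEq E] (hv : IsHalfBoundary w h v) :
    convexHull ℝ (symmetricRange v : Set E) ⊆ strips w h := by
  refine convexHull_min (fun p hp ↦ ?_) convex_strips
  obtain ⟨n, rfl | rfl⟩ := mem_symmetricRange.1 hp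
  exacts [hv.mem_strips n, neg_mem_strips (hv.mem_strips n)]

theorem isConvexPolygon {w : Fin m → ℝ × ℝ →L[ℝ] ℝ} {v : Fin (m + 1) → ℝ × ℝ}
    (hv : IsHalfBoundary w h v) (hm : 1 < m)
    (hh : ∀ j, 0 < h j) (hhull : strips w h ⊆ convexHull ℝ (symmetricRange v)) :
    IsConvexPolygon (strips w h) (symmetricRange v) := by
  have castSucc_mem (n : Fin m) : v n.castSucc ∈ Set.extremePoints ℝ (strips w h) :=
    (hv.isStripEdge hm n).left_mem_extremePoints (by simp) fun h0 ↦ (hh n).ne' <| by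
      simpa [h0] using hv.apply_castSucc n
  have mem (n : Fin (m + 1)) : v n ∈ Set.extremePoints ℝ (strips w h) := by
    cases n using Fin.lastCases with
    | last =>
      rw [hv.last_eq]
      exact neg_mem_extremePoints_strips (castSucc_mem ⟨0, by omega⟩)
    | cast n => exact castSucc_mem n
  refine ⟨hhull.antisymm hv.convexHull_subset, fun p hp ↦ ?_, 0,
    mem_interior_strips fun j ↦ by simp [hh j]⟩
  obtain ⟨n, rfl | rfl⟩ := mem_symmetricRange.1 hp
  exacts [mem n, neg_mem_extremePoints_strips (mem n)]

end IsHalfBoundary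

end HalfBoundary

section IrrationalCoordinates

variable {c : ℝ}

/-- The point of the plane with integer coordinates `v` with respect to `(1, 0)`, `(c, 0)` and
`(0, 1)`. -/
def ofCoords (c : ℝ) : (Fin 3 → ℤ) →ₗ[ℤ] ℝ × ℝ where
  toFun v := (v 0 + v 1 * c, v 2)
  map_add' u v := by
    ext
    · simp only [Pi.add_apply, Prod.fst_add, Int.cast_add]
      ring
    · exact Int.cast_add _ _
  map_smul' a v := by
    ext <;> simp
    ring

lemma ofCoords_apply (c : ℝ) (v : Fin 3 → ℤ) : ofCoords c v = ((v 0 : ℝ) + v 1 * c, (v 2 : ℝ)) :=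
  rfl

lemma ofCoords_injective (hc : Irrational c) : Function.Injective (ofCoords c) := by
  refine (injective_iff_map_eq_zero _).2 fun v hv ↦ ?_
  obtain ⟨h₀₁, h₂⟩ := Prod.ext_iff.1 hv
  have h₁ : v 1 = 0 := by
    by_contra hne
    exact ((hc.intCast_mul hne).intCast_add (v 0)).ne_zero h₀₁
  have h₀ : v 0 = 0 := by simpa [ofCoords_apply, h₁] using h₀₁
  ext n
  fin_cases n
  exacts [h₀, h₁, by simpa [ofCoords_apply] using h₂]

lemma linearIndependent_ofCoords (hc : Irrational c) {M : Matrix (Fin 3) (Fin 3) ℤ}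
    (hM : M.det ≠ 0) : LinearIndependent ℤ fun n ↦ ofCoords c (M n) :=
  (Matrix.linearIndependent_rows_of_det_ne_zero hM).map' _
    (LinearMap.ker_eq_bot.2 (ofCoords_injective hc))

lemma latticePoint_eq_ofCoords (z : ℤ × ℤ) :
    latticePoint z = ofCoords c (z.1 • ![1, 0, 0] + z.2 • ![0, 0, 1]) := by
  simp [latticePoint, ofCoords_apply]

namespace IsKFoldTranslativeTiling

variable {ι : Type} {x : ι → ℝ × ℝ} {k m : ℕ} {w : Fin m → ℝ × ℝ →L[ℝ] ℝ} {h : Fin m → ℝ}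
  {A : Fin (m + 1) → Fin 3 → ℤ} {κ : Type*} [Fintype κ] [DecidableEq κ] {s : κ → Fin m}

lemma ofCoords_mem_periods (hT : IsKFoldTranslativeTiling (strips w h) x k)
    (hK : Bornology.IsBounded (strips w h)) (hc : Irrational c) (hm : 1 < m) (hh : ∀ j, 0 < h j)
    (hA : IsHalfBoundary w h fun n ↦ ofCoords c (A n))
    (hdet : ∀ S : Finset κ, S.Nonempty → ∃ j : Fin 3 → κ, (Matrix.of fun n ↦
      S.piecewise (fun i ↦ A (s i).succ - A (s i).castSucc)
        (fun i ↦ A (s i).castSucc + A (s i).succ) (j n)).det ≠ 0) (z : κ → ℤ) :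
    ofCoords c (∑ i, z i • (A (s i).castSucc + A (s i).succ)) ∈
      periods (translateMultiplicity x) := by
  have hne : (interior (strips w h)).Nonempty := ⟨0, mem_interior_strips fun j ↦ by simp [hh j]⟩
  refine (hT.isBoundedLocallyFinite_translateMultiplicity hK
    hne).mem_periods_of_fwdDiff_fwdDiff_eq_zero
      (fun i ↦ hT.fwdDiff_fwdDiff_translateMultiplicity hK (hh _) (hA.isStripEdge hm (s i)))
      (d := 3) (by simp) (fun S hS ↦ ?_) ?_
  · obtain ⟨j, hj⟩ := hdet S hS
    refine ⟨j, ?_⟩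
    have : (fun n ↦ S.piecewise
        (fun i ↦ ofCoords c (A (s i).succ) - ofCoords c (A (s i).castSucc))
        (fun i ↦ ofCoords c (A (s i).castSucc) + ofCoords c (A (s i).succ)) (j n)) =
        fun n ↦ ofCoords c (S.piecewise (fun i ↦ A (s i).succ - A (s i).castSucc)
        (fun i ↦ A (s i).castSucc + A (s i).succ) (j n)) := by
      ext1 n
      by_cases hn : j n ∈ S <;> simp [hn]
    exact this ▸ linearIndependent_ofCoords hc hj
  · rw [map_sum]
    refine sum_mem fun i _ ↦ ?_
    rw [map_zsmul, map_add]
    exact zsmul_mem (AddSubgroup.subset_closure (Set.mem_range_self i)) _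

theorem latticePoint_mem_periods (hT : IsKFoldTranslativeTiling (strips w h) x k)
    (hK : Bornology.IsBounded (strips w h)) (hc : Irrational c) (hm : 1 < m) (hh : ∀ j, 0 < h j)
    (hA : IsHalfBoundary w h fun n ↦ ofCoords c (A n))
    (hdet : ∀ S : Finset κ, S.Nonempty → ∃ j : Fin 3 → κ, (Matrix.of fun n ↦
      S.piecewise (fun i ↦ A (s i).succ - A (s i).castSucc)
        (fun i ↦ A (s i).castSucc + A (s i).succ) (j n)).det ≠ 0) {z₁ z₂ : κ → ℤ}
    (hz₁ : ∑ i, z₁ i • (A (s i).castSucc + A (s i).succ) = ![1, 0, 0])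
    (hz₂ : ∑ i, z₂ i • (A (s i).castSucc + A (s i).succ) = ![0, 0, 1]) (z : ℤ × ℤ) :
    latticePoint z ∈ periods (translateMultiplicity x) := by
  rw [latticePoint_eq_ofCoords (c := c), ← hz₁, ← hz₂, map_add, map_zsmul, map_zsmul]
  exact add_mem (zsmul_mem (hT.ofCoords_mem_periods hK hc hm hh hA hdet z₁) _)
    (zsmul_mem (hT.ofCoords_mem_periods hK hc hm hh hA hdet z₂) _)

theorem card_le_of_lattice_periods (hT : IsKFoldTranslativeTiling (strips w h) x k)
    (hk : 0 < k) (hper : ∀ z, latticePoint z ∈ periods (translateMultiplicity x))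
    {T : Finset (ℤ × ℤ)} {q : ℝ × ℝ} (hq : ∀ z ∈ T, ∀ j, |w j (q - latticePoint z)| < h j) :
    T.card ≤ k := by
  classical
  rw [← Finset.card_image_of_injective T latticePoint_injective]
  refine hT.card_le_of_subset_periods hk (Finset.forall_mem_image.2 fun z _ ↦ hper z) (q := q) ?_
  exact Finset.forall_mem_image.2 fun z hz ↦ mem_interior_strips (hq z hz)

end IsKFoldTranslativeTiling

end IrrationalCoordinates

section CentralSymmetry

lemma IsConvexPolygon.isBounded {P : Set (ℝ × ℝ)} {V : Finset (ℝ × ℝ)} (hP : IsConvexPolygon P V) :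
    Bornology.IsBounded P :=
  hP.1 ▸ (V.finite_toSet.isCompact_convexHull ℝ).isBounded

lemma isCentrallySymmetric_strips {κ : Type*} (w : κ → ℝ × ℝ →L[ℝ] ℝ) (h : κ → ℝ) :
    IsCentrallySymmetric (strips w h) :=
  ⟨0, fun p hp ↦ by simpa using neg_mem_strips hp⟩

lemma neg_mem_convexHull_symmetricRange {m : ℕ} {E : Type*} [AddCommGroup E] [Module ℝ E]
    [DecidableEq E] {v : Fin m → E} {p : E} (hp : p ∈ convexHull ℝ (symmetricRange v : Set E)) :
    -p ∈ convexHull ℝ (symmetricRange v : Set E) := by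
  rw [← Set.mem_neg, ← convexHull_neg]
  convert hp using 2
  ext q
  simp only [Set.mem_neg, Finset.mem_coe, mem_symmetricRange, neg_eq_iff_eq_neg, neg_neg]
  exact exists_congr fun _ ↦ or_comm

lemma apply_mem_convexHull_symmetricRange {m : ℕ} {E : Type*} [AddCommGroup E] [Module ℝ E]
    [DecidableEq E] (v : Fin m → E) (n : Fin m) :
    v n ∈ convexHull ℝ (symmetricRange v : Set E) :=
  subset_convexHull ℝ _ (mem_symmetricRange.2 ⟨n, .inl rfl⟩)

variable {a : ℤ} {n : ℕ} {l : Fin (n + 1) → ℝ}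

lemma add_val_rev (ha : 2 * a + n = 0) (i : Fin (n + 1)) : (a + i.rev : ℝ) = -(a + i) := by
  have ha' : 2 * (a : ℝ) + n = 0 := by exact_mod_cast ha
  rw [Fin.val_rev, Nat.add_sub_add_right, Nat.cast_sub (Nat.le_of_lt_succ i.2)]
  linarith

lemma neg_mk_rev (ha : 2 * a + n = 0) (i : Fin (n + 1)) :
    -((l i.rev, (a + i.rev : ℝ)) : ℝ × ℝ) = (-l i.rev, (a + i : ℝ)) := by
  rw [Prod.neg_mk, add_val_rev ha, neg_neg]

lemma chainAt_neg_rev (i : Fin n) (t : ℝ) :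
    chainAt (fun i ↦ -l i.rev) i t = -chainAt l i.rev (1 - t) := by
  simp only [chainAt, AffineMap.lineMap_apply_module', Fin.rev_castSucc, Fin.rev_succ, smul_eq_mul]
  ring

lemma isTrapezoidStack_neg_rev {P : Set (ℝ × ℝ)} (hP : ∀ p ∈ P, -p ∈ P) (ha : 2 * a + n = 0)
    (hl : ∀ i, (l i, (a + i : ℝ)) ∈ P) (hsnd : ∀ p ∈ P, a ≤ p.2)
    (hfst : ∀ (i : Fin n), ∀ t ∈ Set.Icc (0 : ℝ) 1, ∀ x, (x, a + i + t) ∈ P → chainAt l i t ≤ x) :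
    IsTrapezoidStack P a l (fun i ↦ -l i.rev) where
  left_mem := hl
  right_mem i := neg_mk_rev ha i ▸ hP _ (hl i.rev)
  snd_mem p hp := by
    have hneg := hsnd _ (hP p hp)
    have ha' : 2 * (a : ℝ) + n = 0 := by exact_mod_cast ha
    rw [Prod.snd_neg] at hneg
    exact ⟨hsnd p hp, by linarith⟩
  fst_mem i t ht x hx := by
    refine ⟨hfst i t ht x hx, ?_⟩
    rw [chainAt_neg_rev, le_neg]
    refine hfst i.rev _ ⟨by linarith [ht.2], by linarith [ht.1]⟩ _ ?_
    have hrev : (a + i.rev : ℝ) = -(a + (i + 1)) := by simpa using add_val_rev ha i.succ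
    convert hP _ hx using 1
    rw [Prod.neg_mk, hrev]
    congr 1
    ring

end CentralSymmetry

/-- The linear functional `(x, y) ↦ x - α y`, whose level lines have horizontal slope `α`. -/
noncomputable def shear (α : ℝ) : ℝ × ℝ →L[ℝ] ℝ :=
  .fst ℝ ℝ ℝ - α • .snd ℝ ℝ ℝ

lemma shear_apply (α : ℝ) (p : ℝ × ℝ) : shear α p = p.1 - α * p.2 := by
  simp [shear]

section Octagon

variable {c : ℝ}

/-- Coordinates of consecutive vertices along half of the boundary of `octagon c`, with respect to
`(1, 0)`, `(c, 0)` and `(0, 1)`. -/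
def octagonCoords : Fin 5 → Fin 3 → ℤ :=
  ![![-2, 1, -2], ![0, -1, 0], ![-1, 1, 1], ![1, -1, 2], ![2, -1, 2]]

/-- The normals of the edges of `octagon c` along the half of its boundary in `octagonCoords`. -/
noncomputable def octagonNormal (c : ℝ) : Fin 4 → ℝ × ℝ →L[ℝ] ℝ :=
  ![shear (1 - c), shear (2 * c - 1), shear (2 - 2 * c), -.snd ℝ ℝ ℝ]

/-- The values of `octagonNormal c` on the edges of `octagon c`, up to sign. -/
def octagonHeight (c : ℝ) : Fin 4 → ℝ := ![c, c, 3 - 3 * c, 2]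

/-- The octagon `D₈`. It is nondegenerate for `2 / 3 < c < 3 / 4`. -/
def octagon (c : ℝ) : Set (ℝ × ℝ) := strips (octagonNormal c) (octagonHeight c)

/-- The vertices of `octagon c`. -/
noncomputable def octagonVertices (c : ℝ) : Finset (ℝ × ℝ) :=
  symmetricRange fun n ↦ ofCoords c (octagonCoords n)

/-- The left ends of the horizontal sections of `octagon c` at the heights `-2, …, 2`. -/
def octagonLeft (c : ℝ) : Fin 5 → ℝ := ![c - 2, -1, -c, c - 1, 1 - c]

lemma ofCoords_octagonCoords : (fun n ↦ ofCoords c (octagonCoords n)) =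
    ![(c - 2, -2), (-c, 0), (c - 1, 1), (1 - c, 2), (2 - c, 2)] := by
  simp only [funext_iff, Fin.forall_fin_succ, IsEmpty.forall_iff, Prod.ext_iff, ofCoords_apply,
    octagonCoords, Matrix.cons_val, Matrix.cons_val_zero, Matrix.cons_val_succ, and_true]
  push_cast
  constructorm* _ ∧ _ <;> ring

lemma mem_octagon {p : ℝ × ℝ} : p ∈ octagon c ↔
    |p.1 - (1 - c) * p.2| ≤ c ∧ |p.1 - (2 * c - 1) * p.2| ≤ c ∧
      |p.1 - (2 - 2 * c) * p.2| ≤ 3 - 3 * c ∧ |p.2| ≤ 2 := by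
  simp [octagon, mem_strips, Fin.forall_fin_succ, octagonNormal, octagonHeight, shear_apply]

lemma isHalfBoundary_octagon (hc : c ∈ Set.Ioo (2 / 3 : ℝ) (3 / 4)) :
    IsHalfBoundary (octagonNormal c) (octagonHeight c) fun n ↦ ofCoords c (octagonCoords n) := by
  obtain ⟨h₁, h₂⟩ := hc
  rw [ofCoords_octagonCoords]
  constructor
  · simp [Fin.last]
  · rw [← octagon]
    simp only [Fin.forall_fin_succ, IsEmpty.forall_iff, Matrix.cons_val_zero, Matrix.cons_val_succ,
      mem_octagon, abs_le, and_true]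
    constructorm* _ ∧ _ <;> linarith
  · simp only [Fin.forall_fin_succ, IsEmpty.forall_iff, Fin.castSucc_zero, Fin.castSucc_succ,
      Matrix.cons_val_zero, Matrix.cons_val_succ, octagonNormal, octagonHeight, shear_apply,
      neg_apply, ContinuousLinearMap.coe_snd', and_true]
    constructorm* _ ∧ _ <;> linarith
  · simp only [Fin.forall_fin_succ, IsEmpty.forall_iff,
      Matrix.cons_val_zero, Matrix.cons_val_succ, octagonNormal, octagonHeight, shear_apply,
      neg_apply, ContinuousLinearMap.coe_snd', and_true]
    constructorm* _ ∧ _ <;> linarith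
  · simp only [Fin.forall_fin_succ, IsEmpty.forall_iff, Fin.castSucc_zero, Fin.castSucc_succ,
      Matrix.cons_val_zero, Matrix.cons_val_succ, octagonNormal, map_sub, shear_apply, neg_apply,
      ContinuousLinearMap.coe_snd', ne_eq, Fin.reduceEq, Fin.reduceSucc, not_true_eq_false,
      not_false_eq_true, forall_const, true_and, and_true]
    constructorm* _ ∧ _ <;> intro h <;> linarith

lemma octagonHeight_pos (hc : c ∈ Set.Ioo (2 / 3 : ℝ) (3 / 4)) (j : Fin 4) :
    0 < octagonHeight c j := by
  obtain ⟨h₁, h₂⟩ := hc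
  revert j
  simp only [Fin.forall_fin_succ, IsEmpty.forall_iff, Matrix.cons_val_zero, Matrix.cons_val_succ,
    octagonHeight, and_true]
  constructorm* _ ∧ _ <;> linarith

lemma octagonLeft_mem_convexHull (i : Fin 5) :
    (octagonLeft c i, ((-2 : ℤ) + i : ℝ)) ∈ convexHull ℝ (octagonVertices c : Set (ℝ × ℝ)) := by
  let v : Fin 5 → ℝ × ℝ := fun n ↦ ofCoords c (octagonCoords n)
  have v_mem (n : Fin 5) : v n ∈ convexHull ℝ (octagonVertices c : Set (ℝ × ℝ)) :=
    apply_mem_convexHull_symmetricRange v n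
  have left_eq (i) : (octagonLeft c i, ((-2 : ℤ) + i : ℝ)) =
      ![v 0, midpoint ℝ (v 0) (v 1), v 1, v 2, v 3] i := by
    simp only [v, congrFun ofCoords_octagonCoords]
    revert i
    simp only [Fin.forall_fin_succ, IsEmpty.forall_iff, Prod.ext_iff, Fin.val_zero, Fin.val_succ,
      Matrix.cons_val, Matrix.cons_val_zero, Matrix.cons_val_succ, octagonLeft,
      midpoint_eq_smul_add, Prod.fst_add, Prod.snd_add, Prod.smul_fst, Prod.smul_snd, smul_eq_mul,
      invOf_eq_inv, true_and, and_true]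
    push_cast
    constructorm* _ ∧ _ <;> ring
  rw [left_eq]
  fin_cases i
  exacts [v_mem 0, (convex_convexHull ℝ _).midpoint_mem (v_mem 0) (v_mem 1), v_mem 1, v_mem 2,
    v_mem 3]

lemma isTrapezoidStack_octagon (hc : c ∈ Set.Ioo (2 / 3 : ℝ) (3 / 4)) :
    IsTrapezoidStack (octagon c) (-2) (octagonLeft c) (fun i ↦ -octagonLeft c i.rev) := by
  refine isTrapezoidStack_neg_rev (fun _ ↦ neg_mem_strips) (by norm_num) (fun i ↦ ?_)
    (fun p hp ↦ ?_) ?_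
  · exact (isHalfBoundary_octagon hc).convexHull_subset (octagonLeft_mem_convexHull i)
  · push_cast
    linarith [abs_le.1 (mem_octagon.1 hp).2.2.2]
  · simp only [Fin.forall_fin_succ, IsEmpty.forall_iff, Fin.castSucc_zero, Fin.castSucc_succ,
      Matrix.cons_val_zero, Matrix.cons_val_succ, octagonLeft, chainAt,
      AffineMap.lineMap_apply_module', smul_eq_mul, mem_octagon, abs_le, Fin.val_zero, Fin.val_succ,
      and_true]
    push_cast
    constructorm* _ ∧ _
    all_goals
      rintro t - x ⟨h₁, h₂, h₃, -⟩
      linarith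

theorem isConvexPolygon_octagon (hc : c ∈ Set.Ioo (2 / 3 : ℝ) (3 / 4)) :
    IsConvexPolygon (octagon c) (octagonVertices c) :=
  (isHalfBoundary_octagon hc).isConvexPolygon (by norm_num) (octagonHeight_pos hc) <|
    (isTrapezoidStack_octagon hc).subset_of_convex (by norm_num) (convex_convexHull ℝ _)
      octagonLeft_mem_convexHull fun i ↦ neg_mk_rev (a := -2) (by norm_num) i ▸
        neg_mem_convexHull_symmetricRange (octagonLeft_mem_convexHull i.rev)

lemma card_octagonVertices (hc : Irrational c) : (octagonVertices c).card = 8 := by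
  rw [octagonVertices, card_symmetricRange_comp (ofCoords_injective hc)]
  decide +kernel

theorem isKFoldTranslativeTiling_octagon (hc : c ∈ Set.Ioo (2 / 3 : ℝ) (3 / 4)) :
    IsKFoldTranslativeTiling (octagon c) latticePoint 5 := by
  refine isKFoldTranslativeTiling_of_isTrapezoidStack (isTrapezoidStack_octagon hc) convex_strips
    (σ := ![2, 3, 1, 0]) (d := ![2, 2, 1, 0]) (by decide) (fun i ↦ ?_) (fun i ↦ ?_) (by decide)
  all_goals
    revert i
    simp only [Fin.forall_fin_succ, IsEmpty.forall_iff, Matrix.cons_val_zero,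
      Matrix.cons_val_succ, octagonLeft, and_true]
    push_cast
    constructorm* _ ∧ _ <;> ring

theorem five_le_of_isKFoldTranslativeTiling_octagon (hc : c ∈ Set.Ioo (2 / 3 : ℝ) (3 / 4))
    (hirr : Irrational c) {ι : Type} {x : ι → ℝ × ℝ} {k : ℕ} (hk : 0 < k)
    (hT : IsKFoldTranslativeTiling (octagon c) x k) : 5 ≤ k := by
  have lattice_periods := hT.latticePoint_mem_periods (isConvexPolygon_octagon hc).isBounded hirr
    (by norm_num) (octagonHeight_pos hc) (isHalfBoundary_octagon hc) (s := Fin.castSucc)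
    (z₁ := ![-1, 1, -1]) (z₂ := ![-1, 2, -1])
    (by simp only [Matrix.det_fin_three]; decide +kernel) (by decide) (by decide)
  refine hT.card_le_of_lattice_periods hk lattice_periods
    (T := {(0, -1), (-1, -1), (0, 0), (0, 1), (1, 2)}) (q := (1 / 10, 1 / 2)) ?_
  obtain ⟨h₁, h₂⟩ := hc
  simp only [Finset.mem_insert, Finset.mem_singleton, forall_eq_or_imp, forall_eq,
    Fin.forall_fin_succ, IsEmpty.forall_iff, Matrix.cons_val_zero, Matrix.cons_val_succ,
    octagonNormal, octagonHeight, shear_apply, neg_apply, ContinuousLinearMap.coe_snd',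
    latticePoint, Prod.mk_sub_mk, abs_lt, and_true]
  push_cast
  constructorm* _ ∧ _ <;> linarith

end Octagon

section Decagon

variable {c : ℝ}

/-- Coordinates of consecutive vertices along half of the boundary of `decagon c`, with respect to
`(1, 0)`, `(c, 0)` and `(0, 1)`. -/
def decagonCoords : Fin 6 → Fin 3 → ℤ :=
  ![![2, -1, 3], ![0, 1, 3], ![1, -1, 2], ![-1, 1, 1], ![0, -1, -1], ![-2, 1, -3]]

/-- The normals of the edges of `decagon c` along the half of its boundary in `decagonCoords`. -/
noncomputable def decagonNormal (c : ℝ) : Fin 5 → ℝ × ℝ →L[ℝ] ℝ :=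
  ![-.snd ℝ ℝ ℝ, shear (2 * c - 1), shear (2 - 2 * c), shear (c - 1 / 2), shear (1 - c)]

/-- The values of `decagonNormal c` on the edges of `decagon c`, up to sign. -/
noncomputable def decagonHeight (c : ℝ) : Fin 5 → ℝ := ![3, 5 * c - 3, 3 - 3 * c, 1 / 2, 2 * c - 1]

/-- The decagon `D₁₀`. It is nondegenerate for `3 / 4 < c < 5 / 6`. -/
def decagon (c : ℝ) : Set (ℝ × ℝ) := strips (decagonNormal c) (decagonHeight c)

/-- The vertices of `decagon c`. -/
noncomputable def decagonVertices (c : ℝ) : Finset (ℝ × ℝ) :=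
  symmetricRange fun n ↦ ofCoords c (decagonCoords n)

/-- The left ends of the horizontal sections of `decagon c` at the heights `-3, …, 3`. -/
noncomputable def decagonLeft (c : ℝ) : Fin 7 → ℝ := ![c - 2, -1, -c, -1 / 2, c - 1, 1 - c, c]

lemma ofCoords_decagonCoords : (fun n ↦ ofCoords c (decagonCoords n)) =
    ![(2 - c, 3), (c, 3), (1 - c, 2), (c - 1, 1), (-c, -1), (c - 2, -3)] := by
  simp only [funext_iff, Fin.forall_fin_succ, IsEmpty.forall_iff, Prod.ext_iff, ofCoords_apply,
    decagonCoords, Matrix.cons_val, Matrix.cons_val_zero, Matrix.cons_val_succ, and_true]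
  push_cast
  constructorm* _ ∧ _ <;> ring

lemma mem_decagon {p : ℝ × ℝ} : p ∈ decagon c ↔
    |p.2| ≤ 3 ∧ |p.1 - (2 * c - 1) * p.2| ≤ 5 * c - 3 ∧ |p.1 - (2 - 2 * c) * p.2| ≤ 3 - 3 * c ∧
      |p.1 - (c - 1 / 2) * p.2| ≤ 1 / 2 ∧ |p.1 - (1 - c) * p.2| ≤ 2 * c - 1 := by
  simp [decagon, mem_strips, Fin.forall_fin_succ, decagonNormal, decagonHeight, shear_apply]

lemma isHalfBoundary_decagon (hc : c ∈ Set.Ioo (3 / 4 : ℝ) (5 / 6)) :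
    IsHalfBoundary (decagonNormal c) (decagonHeight c) fun n ↦ ofCoords c (decagonCoords n) := by
  obtain ⟨h₁, h₂⟩ := hc
  rw [ofCoords_decagonCoords]
  constructor
  · simp [Fin.last]
  · rw [← decagon]
    simp only [Fin.forall_fin_succ, IsEmpty.forall_iff, Matrix.cons_val_zero, Matrix.cons_val_succ,
      mem_decagon, abs_le, and_true]
    constructorm* _ ∧ _ <;> linarith
  · simp only [Fin.forall_fin_succ, IsEmpty.forall_iff, Fin.castSucc_zero, Fin.castSucc_succ,
      Matrix.cons_val_zero, Matrix.cons_val_succ, decagonNormal, decagonHeight, shear_apply,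
      neg_apply, ContinuousLinearMap.coe_snd', true_and, and_true]
    constructorm* _ ∧ _ <;> linarith
  · simp only [Fin.forall_fin_succ, IsEmpty.forall_iff,
      Matrix.cons_val_zero, Matrix.cons_val_succ, decagonNormal, decagonHeight, shear_apply,
      neg_apply, ContinuousLinearMap.coe_snd', true_and, and_true]
    constructorm* _ ∧ _ <;> linarith
  · simp only [Fin.forall_fin_succ, IsEmpty.forall_iff, Fin.castSucc_zero, Fin.castSucc_succ,
      Matrix.cons_val_zero, Matrix.cons_val_succ, decagonNormal, map_sub, shear_apply, neg_apply,
      ContinuousLinearMap.coe_snd', ne_eq, Fin.reduceEq, Fin.reduceSucc, not_true_eq_false,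
      not_false_eq_true, forall_const, true_and, and_true]
    constructorm* _ ∧ _ <;> intro h <;> linarith

lemma decagonHeight_pos (hc : c ∈ Set.Ioo (3 / 4 : ℝ) (5 / 6)) (j : Fin 5) :
    0 < decagonHeight c j := by
  obtain ⟨h₁, h₂⟩ := hc
  revert j
  simp only [Fin.forall_fin_succ, IsEmpty.forall_iff, Matrix.cons_val_zero, Matrix.cons_val_succ,
    decagonHeight, and_true]
  constructorm* _ ∧ _ <;> linarith

lemma decagonLeft_mem_convexHull (i : Fin 7) :
    (decagonLeft c i, ((-3 : ℤ) + i : ℝ)) ∈ convexHull ℝ (decagonVertices c : Set (ℝ × ℝ)) := by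
  let v : Fin 6 → ℝ × ℝ := fun n ↦ ofCoords c (decagonCoords n)
  have v_mem (n : Fin 6) : v n ∈ convexHull ℝ (decagonVertices c : Set (ℝ × ℝ)) :=
    apply_mem_convexHull_symmetricRange v n
  have left_eq (i) : (decagonLeft c i, ((-3 : ℤ) + i : ℝ)) =
      ![v 5, midpoint ℝ (v 5) (v 4), v 4, midpoint ℝ (v 3) (v 4), v 3, v 2, v 1] i := by
    simp only [v, congrFun ofCoords_decagonCoords]
    revert i
    simp only [Fin.forall_fin_succ, IsEmpty.forall_iff, Prod.ext_iff, Fin.val_zero, Fin.val_succ,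
      Matrix.cons_val, Matrix.cons_val_zero, Matrix.cons_val_succ, decagonLeft,
      midpoint_eq_smul_add, Prod.fst_add, Prod.snd_add, Prod.smul_fst, Prod.smul_snd, smul_eq_mul,
      invOf_eq_inv, true_and, and_true]
    push_cast
    constructorm* _ ∧ _ <;> ring
  rw [left_eq]
  fin_cases i
  exacts [v_mem 5, (convex_convexHull ℝ _).midpoint_mem (v_mem 5) (v_mem 4), v_mem 4,
    (convex_convexHull ℝ _).midpoint_mem (v_mem 3) (v_mem 4), v_mem 3, v_mem 2, v_mem 1]

lemma isTrapezoidStack_decagon (hc : c ∈ Set.Ioo (3 / 4 : ℝ) (5 / 6)) :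
    IsTrapezoidStack (decagon c) (-3) (decagonLeft c) (fun i ↦ -decagonLeft c i.rev) := by
  refine isTrapezoidStack_neg_rev (fun _ ↦ neg_mem_strips) (by norm_num) (fun i ↦ ?_)
    (fun p hp ↦ ?_) ?_
  · exact (isHalfBoundary_decagon hc).convexHull_subset (decagonLeft_mem_convexHull i)
  · push_cast
    linarith [abs_le.1 (mem_decagon.1 hp).1]
  · simp only [Fin.forall_fin_succ, IsEmpty.forall_iff, Fin.castSucc_zero, Fin.castSucc_succ,
      Matrix.cons_val_zero, Matrix.cons_val_succ, decagonLeft, chainAt,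
      AffineMap.lineMap_apply_module', smul_eq_mul, mem_decagon, abs_le, Fin.val_zero, Fin.val_succ,
      and_true]
    push_cast
    constructorm* _ ∧ _
    all_goals
      rintro t - x ⟨-, h₂, h₃, h₄, h₅⟩
      linarith

theorem isConvexPolygon_decagon (hc : c ∈ Set.Ioo (3 / 4 : ℝ) (5 / 6)) :
    IsConvexPolygon (decagon c) (decagonVertices c) :=
  (isHalfBoundary_decagon hc).isConvexPolygon (by norm_num) (decagonHeight_pos hc) <|
    (isTrapezoidStack_decagon hc).subset_of_convex (by norm_num) (convex_convexHull ℝ _)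
      decagonLeft_mem_convexHull fun i ↦ neg_mk_rev (a := -3) (by norm_num) i ▸
        neg_mem_convexHull_symmetricRange (decagonLeft_mem_convexHull i.rev)

lemma card_decagonVertices (hc : Irrational c) : (decagonVertices c).card = 10 := by
  rw [decagonVertices, card_symmetricRange_comp (ofCoords_injective hc)]
  decide +kernel

theorem isKFoldTranslativeTiling_decagon (hc : c ∈ Set.Ioo (3 / 4 : ℝ) (5 / 6)) :
    IsKFoldTranslativeTiling (decagon c) latticePoint 5 := by
  refine isKFoldTranslativeTiling_of_isTrapezoidStack (isTrapezoidStack_decagon hc) convex_strips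
    (σ := ![4, 5, 2, 3, 1, 0]) (d := ![2, 2, 1, 1, 0, -1]) (by decide) (fun i ↦ ?_) (fun i ↦ ?_)
    (by decide)
  all_goals
    revert i
    simp only [Fin.forall_fin_succ, IsEmpty.forall_iff, Matrix.cons_val_zero,
      Matrix.cons_val_succ, decagonLeft, and_true]
    push_cast
    constructorm* _ ∧ _ <;> ring

theorem five_le_of_isKFoldTranslativeTiling_decagon (hc : c ∈ Set.Ioo (3 / 4 : ℝ) (5 / 6))
    (hirr : Irrational c) {ι : Type} {x : ι → ℝ × ℝ} {k : ℕ} (hk : 0 < k)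
    (hT : IsKFoldTranslativeTiling (decagon c) x k) : 5 ≤ k := by
  have lattice_periods := hT.latticePoint_mem_periods (isConvexPolygon_decagon hc).isBounded hirr
    (by norm_num) (decagonHeight_pos hc) (isHalfBoundary_decagon hc) (s := Fin.castSucc)
    (z₁ := ![0, 0, 0, -1]) (z₂ := ![0, -1, 2, -1])
    (by simp only [Matrix.det_fin_three]; decide +kernel) (by decide) (by decide)
  refine hT.card_le_of_lattice_periods hk lattice_periods
    (T := {(0, -1), (0, 0), (0, 1), (1, 2), (1, 3)}) (q := (1 / 5, 1 / 2)) ?_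
  obtain ⟨h₁, h₂⟩ := hc
  simp only [Finset.mem_insert, Finset.mem_singleton, forall_eq_or_imp, forall_eq,
    Fin.forall_fin_succ, IsEmpty.forall_iff, Matrix.cons_val_zero, Matrix.cons_val_succ,
    decagonNormal, decagonHeight, shear_apply, neg_apply, ContinuousLinearMap.coe_snd',
    latticePoint, Prod.mk_sub_mk, abs_lt, and_true]
  push_cast
  constructorm* _ ∧ _ <;> linarith

end Decagon

/-- There exist a centrally symmetric convex octagon and a centrally symmetric convex
decagon each of which admits a five-fold translative tiling of the plane but admits no
`k`-fold translative tiling for any `k ≤ 4`; that is, `τ(D₈) = τ(D₁₀) = 5`. -/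
theorem exists_octagon_and_decagon_with_tau_five :
    ∃ (D₈ : Set (ℝ × ℝ)) (V₈ : Finset (ℝ × ℝ)) (D₁₀ : Set (ℝ × ℝ)) (V₁₀ : Finset (ℝ × ℝ)),
      IsConvexPolygon D₈ V₈ ∧ V₈.card = 8 ∧ IsCentrallySymmetric D₈ ∧
      IsConvexPolygon D₁₀ V₁₀ ∧ V₁₀.card = 10 ∧ IsCentrallySymmetric D₁₀ ∧
      (∃ (ι : Type) (x : ι → ℝ × ℝ), IsKFoldTranslativeTiling D₈ x 5) ∧
      (∀ (k : ℕ), 0 < k → k ≤ 4 →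
        ∀ (ι : Type) (x : ι → ℝ × ℝ), ¬ IsKFoldTranslativeTiling D₈ x k) ∧
      (∃ (ι : Type) (x : ι → ℝ × ℝ), IsKFoldTranslativeTiling D₁₀ x 5) ∧
      (∀ (k : ℕ), 0 < k → k ≤ 4 →
        ∀ (ι : Type) (x : ι → ℝ × ℝ), ¬ IsKFoldTranslativeTiling D₁₀ x k) := by
  obtain ⟨c, hc, hc₁, hc₂⟩ := exists_irrational_btwn (show (2 / 3 : ℝ) < 3 / 4 by norm_num)
  obtain ⟨d, hd, hd₁, hd₂⟩ := exists_irrational_btwn (show (3 / 4 : ℝ) < 5 / 6 by norm_num)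
  refine ⟨octagon c, octagonVertices c, decagon d, decagonVertices d,
    isConvexPolygon_octagon ⟨hc₁, hc₂⟩, card_octagonVertices hc, isCentrallySymmetric_strips _ _,
    isConvexPolygon_decagon ⟨hd₁, hd₂⟩, card_decagonVertices hd, isCentrallySymmetric_strips _ _,
    ⟨_, _, isKFoldTranslativeTiling_octagon ⟨hc₁, hc₂⟩⟩, fun k hk hk₄ ι x hT ↦ ?_,
    ⟨_, _, isKFoldTranslativeTiling_decagon ⟨hd₁, hd₂⟩⟩, fun k hk hk₄ ι x hT ↦ ?_⟩
  · have := five_le_of_isKFoldTranslativeTiling_octagon ⟨hc₁, hc₂⟩ hc hk hT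
    omega
  · have := five_le_of_isKFoldTranslativeTiling_decagon ⟨hd₁, hd₂⟩ hd hk hT
    omega
end

section
/- Let P be a centrally symmetric convex 2m-gon and let P + X be a k-fold translative tiling of the plane. For a vertex v ∈ V + X, define φ(v) = k − #{i : v ∈ int(P) + x_i} (the count taken with multiplicity over the index set), and let ℓ be the number of indices i such that v lies in the relative interior of some edge of P + x_i. Then there exists a positive integer κ such that φ(v) = κ·(m−1)/2 + ℓ/2. -/
open Pointwise

/-!
Fix a vertex `w` of `P`, let `w'` be the antipodal vertex, and choose parallel lines supporting `P`
only at `w` and `w'`, with direction `d`. Apart from `w` and `w'`, every point of `P` enters `int P`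
at once when moved along `d` or along `-d`, and it does so in both directions only if it is already
interior. Moving `v` slightly along `d` avoids the boundaries of all translates, and such a generic
point is covered exactly `k` times. Hence exactly `k` indices have `v - x i` entering `int P` along
`d`, and likewise for `-d`. Write `N A` for the number of indices with `v - x i ∈ A`. Adding the two
counts gives
`2 k = N (int P) + N (P \ {w, w'})`,
so `κ = N {w} + N {w'}` does not depend on `w`. Summing over the `2 m` vertices, the number of
translates having `v` as a vertex is `m κ`, so that `N P = N (int P) + ℓ + m κ`, and the formula
follows.
-/

open Filter Topology Set

section ExposedFaces

variable {E : Type*} [NormedAddCommGroup E] [NormedSpace ℝ E] {s F K : Set E} {f : StrongDual ℝ E}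
  {w w' c p : E}

lemma subset_convexHull_inter_of_isExposed (hs : s.Finite)
    (hF : IsExposed ℝ (convexHull ℝ s) F) : F ⊆ convexHull ℝ (F ∩ s) := by
  have hext : F.extremePoints ℝ ⊆ F ∩ s := by
    rw [hF.isExtreme.extremePoints_eq]
    exact inter_subset_inter_right F extremePoints_convexHull_subset
  have hclosed : IsClosed (convexHull ℝ (F ∩ s)) :=
    ((hs.inter_of_right F).isCompact_convexHull ℝ).isClosed
  calc
    F = closure (convexHull ℝ (F.extremePoints ℝ)) :=
      (closure_convexHull_extremePoints (hF.isCompact (hs.isCompact_convexHull ℝ))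
        (hF.convex (convex_convexHull ℝ s))).symm
    _ ⊆ convexHull ℝ (F ∩ s) := closure_minimal (convexHull_mono hext) hclosed

lemma extremePoints_convexHull_subset_exposedPoints (hs : s.Finite) :
    (convexHull ℝ s).extremePoints ℝ ⊆ (convexHull ℝ s).exposedPoints ℝ := by
  intro w hw
  have hw_notMem : w ∉ convexHull ℝ (s \ {w}) := fun h =>
    ((convex_convexHull ℝ s).mem_extremePoints_iff_mem_sdiff_convexHull_sdiff.1 hw).2
      (convexHull_mono (sdiff_subset_sdiff_left (subset_convexHull ℝ s)) h)
  obtain ⟨f, u, hfu, huw⟩ := geometric_hahn_banach_closed_point (convex_convexHull ℝ _)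
    (hs.sdiff.isCompact_convexHull ℝ).isClosed hw_notMem
  have hlt : ∀ y ∈ s, y ≠ w → f y < f w := fun y hy hyw =>
    (hfu y (subset_convexHull ℝ _ ⟨hy, hyw⟩)).trans huw
  have hle : ∀ y ∈ convexHull ℝ s, f y ≤ f w :=
    convexHull_min (fun y hy => (eq_or_ne y w).elim (fun h => (congrArg f h).le)
      fun h => (hlt y hy h).le) (convex_halfSpace_le f.toLinearMap.isLinear (f w))
  have hface : f.toExposed (convexHull ℝ s) ∩ s ⊆ {w} := fun y hy => by
    by_contra hyw
    exact (hy.1.2 w hw.1).not_gt (hlt y hy.2 hyw)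
  refine ⟨hw.1, f, fun y hy => ⟨hle y hy, fun hwy => ?_⟩⟩
  have hy_face : y ∈ f.toExposed (convexHull ℝ s) := ⟨hy, fun z hz => (hle z hz).trans hwy⟩
  have := convexHull_mono hface
    (subset_convexHull_inter_of_isExposed hs ContinuousLinearMap.toExposed.isExposed hy_face)
  rwa [convexHull_singleton] at this

lemma exists_toExposed_eq_singleton (hw : w ∈ K.exposedPoints ℝ) :
    ∃ f : StrongDual ℝ E, f.toExposed K = {w} := by
  obtain ⟨f, hf⟩ := mem_exposedPoints_iff_exposed_singleton.1 hw (singleton_nonempty w)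
  exact ⟨f, hf.symm⟩

lemma mem_of_toExposed_eq_singleton (hf : f.toExposed K = {w}) : w ∈ K :=
  (hf.superset rfl).1

lemma lt_of_toExposed_eq_singleton (hf : f.toExposed K = {w}) (hp : p ∈ K) (hpw : p ≠ w) :
    f p < f w := by
  by_contra! hle
  exact hpw (hf.subset ⟨hp, fun y hy => ((hf.superset rfl).2 y hy).trans hle⟩)

lemma disjoint_interior_toExposed (hf : f ≠ 0) : Disjoint (interior K) (f.toExposed K) := by
  refine disjoint_left.2 fun p hp hpf => hf ?_
  have hmax : IsLocalMax f p := by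
    filter_upwards [mem_interior_iff_mem_nhds.1 hp] with y hy using hpf.2 y hy
  exact hmax.hasFDerivAt_eq_zero f.hasFDerivAt

lemma notMem_interior_of_toExposed_eq_singleton [Nontrivial E] (hf : f.toExposed K = {w}) :
    w ∉ interior K := fun hw =>
  disjoint_left.1 (disjoint_interior_extremePoints K) hw <| exposedPoints_subset_extremePoints <|
    mem_exposedPoints_iff_exposed_singleton.2 <| hf ▸ ContinuousLinearMap.toExposed.isExposed

lemma apply_lt_apply_of_toExposed_eq_singleton [Nontrivial E] (hK : (interior K).Nonempty)
    (hmax : f.toExposed K = {w}) (hmin : (-f).toExposed K = {w'}) : f w' < f w := by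
  obtain ⟨o, ho⟩ := hK
  have hoK := interior_subset ho
  have how := lt_of_toExposed_eq_singleton hmax hoK
    (ne_of_mem_of_not_mem ho (notMem_interior_of_toExposed_eq_singleton hmax))
  have how' := lt_of_toExposed_eq_singleton hmin hoK
    (ne_of_mem_of_not_mem ho (notMem_interior_of_toExposed_eq_singleton hmin))
  exact (neg_lt_neg_iff.1 how').trans how

lemma neg_toExposed_eq_singleton_of_symmetric (hc : ∀ p ∈ K, 2 • c - p ∈ K)
    (hf : f.toExposed K = {w}) : (-f).toExposed K = {2 • c - w} := by
  have hmem : ∀ p, p ∈ (-f).toExposed K ↔ 2 • c - p ∈ f.toExposed K := by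
    refine fun p => ⟨fun hp => ⟨hc p hp.1, fun y hy => ?_⟩, fun hp => ⟨?_, fun y hy => ?_⟩⟩
    · have := hp.2 _ (hc y hy)
      simp only [neg_apply, map_sub] at this ⊢
      linarith
    · simpa using hc _ hp.1
    · have := hp.2 _ (hc y hy)
      simp only [neg_apply, map_sub] at this ⊢
      linarith
  ext p
  rw [hmem, hf, mem_singleton_iff, mem_singleton_iff, sub_eq_iff_eq_add, eq_sub_iff_add_eq',
    eq_comm]

lemma exists_mem_interior_apply_eq (hK : Convex ℝ K) (hint : (interior K).Nonempty) {r : ℝ}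
    (hw : w ∈ K) (hw' : w' ∈ K) (hr : r ∈ Ioo (f w') (f w)) : ∃ p ∈ interior K, f p = r := by
  have hdense : K ⊆ closure (interior K) := by
    rw [hK.closure_interior_eq_closure_of_nonempty_interior hint]
    exact subset_closure
  obtain ⟨a, har, ha⟩ := mem_closure_iff.1 (hdense hw') {y | f y < r}
    (isOpen_Iio.preimage f.continuous) hr.1
  obtain ⟨b, hbr, hb⟩ := mem_closure_iff.1 (hdense hw) {y | r < f y}
    (isOpen_Ioi.preimage f.continuous) hr.2
  exact hK.interior.isPreconnected.intermediate_value ha hb f.continuous.continuousOn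
    ⟨le_of_lt har, le_of_lt hbr⟩

end ExposedFaces

lemma exists_ne_zero_ker_eq_span_singleton {𝕜 E : Type*} [Field 𝕜] [AddCommGroup E] [Module 𝕜 E]
    (hE : Module.finrank 𝕜 E = 2) {f : Module.Dual 𝕜 E} (hf : f ≠ 0) :
    ∃ d ≠ 0, f.ker = 𝕜 ∙ d := by
  have : FiniteDimensional 𝕜 E := Module.finite_of_finrank_eq_succ hE
  have hfinrank : Module.finrank 𝕜 f.ker = 1 := by
    have := Module.Dual.finrank_ker_add_one_of_ne_zero hf
    omega
  obtain ⟨d, hd, hspan⟩ := finrank_eq_one_iff'.1 hfinrank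
  refine ⟨d, by simpa using hd, le_antisymm (fun y hy => ?_) ?_⟩
  · obtain ⟨t, ht⟩ := hspan ⟨y, hy⟩
    exact Submodule.mem_span_singleton.2 ⟨t, congrArg Subtype.val ht⟩
  · simp

section Collinear

variable {𝕜 E : Type*} [Field 𝕜] [LinearOrder 𝕜] [IsStrictOrderedRing 𝕜] [AddCommGroup E]
  [Module 𝕜 E]

lemma exists_mem_openSegment_of_mem_convexHull {T : Set 𝕜} {t : 𝕜} (ht : t ∈ convexHull 𝕜 T)
    (htT : t ∉ T) : ∃ a ∈ T, ∃ b ∈ T, t ∈ openSegment 𝕜 a b := by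
  obtain ⟨a, ha, hat⟩ : ∃ a ∈ T, a < t := by
    by_contra! h
    exact lt_irrefl t <| convexHull_min
      (fun b hb => (h b hb).lt_of_ne (ne_of_mem_of_not_mem hb htT).symm) (convex_Ioi t) ht
  obtain ⟨b, hb, htb⟩ : ∃ b ∈ T, t < b := by
    by_contra! h
    exact lt_irrefl t <| convexHull_min
      (fun b hb => (h b hb).lt_of_ne (ne_of_mem_of_not_mem hb htT)) (convex_Iio t) ht
  exact ⟨a, ha, b, hb, by rw [openSegment_eq_Ioo (hat.trans htb)]; exact ⟨hat, htb⟩⟩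

lemma exists_mem_openSegment_of_collinear {S : Set E} {q : E} (hS : Collinear 𝕜 S)
    (hq : q ∈ convexHull 𝕜 S) (hqS : q ∉ S) : ∃ a ∈ S, ∃ b ∈ S, q ∈ openSegment 𝕜 a b := by
  obtain ⟨p₀, e, he⟩ := (collinear_iff_exists_forall_eq_smul_vadd S).1 hS
  let γ : 𝕜 →ᵃ[𝕜] E := AffineMap.lineMap p₀ (e +ᵥ p₀)
  have hγ : ∀ t, γ t = t • e +ᵥ p₀ := fun t => by simp [γ, AffineMap.lineMap_apply]
  have hSγ : γ '' (γ ⁻¹' S) = S := image_preimage_eq_of_subset fun p hp => by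
    obtain ⟨t, ht⟩ := he p hp
    exact ⟨t, by rw [hγ, ht]⟩
  rw [← hSγ, ← γ.image_convexHull] at hq
  obtain ⟨t, ht, rfl⟩ := hq
  obtain ⟨a, ha, b, hb, hab⟩ := exists_mem_openSegment_of_mem_convexHull ht hqS
  exact ⟨γ a, ha, γ b, hb, image_openSegment 𝕜 γ a b ▸ mem_image_of_mem γ hab⟩

end Collinear

section ConvexPolygon

variable {E : Type*} [NormedAddCommGroup E] [NormedSpace ℝ E] {f : StrongDual ℝ E}

lemma collinear_toExposed (hE : Module.finrank ℝ E = 2) (hf : f ≠ 0) (K : Set E) :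
    Collinear ℝ (f.toExposed K) := by
  obtain ⟨d, -, hker⟩ := exists_ne_zero_ker_eq_span_singleton hE
    (ContinuousLinearMap.coe_injective.ne hf)
  rcases (f.toExposed K).eq_empty_or_nonempty with h | ⟨p, hp⟩
  · exact h ▸ collinear_empty ℝ E
  refine (collinear_iff_of_mem hp).2 ⟨d, fun y hy => ?_⟩
  have hyp : y - p ∈ f.ker := by
    rw [LinearMap.mem_ker, map_sub, sub_eq_zero]
    exact (hp.2 y hy.1).antisymm (hy.2 p hp.1)
  rw [hker, Submodule.mem_span_singleton] at hyp
  obtain ⟨t, ht⟩ := hyp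
  exact ⟨t, by rw [ht, vadd_eq_add, sub_add_cancel]⟩

/-- The union of the relative interiors of the edges of the polygon `P` with vertex set `V`. -/
def edgeInteriors (P : Set (ℝ × ℝ)) (V : Finset (ℝ × ℝ)) : Set (ℝ × ℝ) :=
  {q | ∃ a b : ℝ × ℝ, IsEdge P V a b ∧ q ∈ openSegment ℝ a b}

variable {P : Set (ℝ × ℝ)} {V : Finset (ℝ × ℝ)} {c q w : ℝ × ℝ}

lemma edgeInteriors_subset_frontier : edgeInteriors P V ⊆ frontier P := by
  rintro q ⟨a, b, hab, hq⟩
  exact hab.2.2.2 (openSegment_subset_segment ℝ a b hq)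

namespace IsConvexPolygon

lemma convex (hP : IsConvexPolygon P V) : Convex ℝ P :=
  hP.1 ▸ convex_convexHull ℝ _

lemma isCompact (hP : IsConvexPolygon P V) : IsCompact P :=
  hP.1 ▸ V.finite_toSet.isCompact_convexHull ℝ

lemma edgeInteriors_subset (hP : IsConvexPolygon P V) : edgeInteriors P V ⊆ P :=
  edgeInteriors_subset_frontier.trans hP.isCompact.isClosed.frontier_subset

lemma vertices_subset (hP : IsConvexPolygon P V) : (V : Set (ℝ × ℝ)) ⊆ P :=
  hP.1 ▸ subset_convexHull ℝ _

lemma extremePoints_eq (hP : IsConvexPolygon P V) : P.extremePoints ℝ = V := by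
  refine Subset.antisymm ?_ hP.2.1
  rw [hP.1]
  exact extremePoints_convexHull_subset

lemma mem_exposedPoints (hP : IsConvexPolygon P V) (hw : w ∈ V) : w ∈ P.exposedPoints ℝ := by
  have hext := hP.2.1 w hw
  rw [hP.1] at hext ⊢
  exact extremePoints_convexHull_subset_exposedPoints V.finite_toSet hext

lemma reflection_mem_vertices (hP : IsConvexPolygon P V) (hc : ∀ p ∈ P, 2 • c - p ∈ P)
    (hw : w ∈ V) : 2 • c - w ∈ V := by
  obtain ⟨f, hf⟩ := exists_toExposed_eq_singleton (hP.mem_exposedPoints hw)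
  have hexp : 2 • c - w ∈ P.exposedPoints ℝ := mem_exposedPoints_iff_exposed_singleton.2 <|
    neg_toExposed_eq_singleton_of_symmetric hc hf ▸ ContinuousLinearMap.toExposed.isExposed
  rw [← Finset.mem_coe, ← hP.extremePoints_eq]
  exact exposedPoints_subset_extremePoints hexp

lemma mem_edgeInteriors_of_notMem (hP : IsConvexPolygon P V) (hq : q ∈ P) (hqi : q ∉ interior P)
    (hqV : q ∉ V) : q ∈ edgeInteriors P V := by
  obtain ⟨f, hf, hfq⟩ := geometric_hahn_banach_of_nonempty_interior_point hP.convex hqi hP.2.2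
  set F := f.toExposed P
  have hFexp : IsExposed ℝ P F := ContinuousLinearMap.toExposed.isExposed
  have hqF : q ∈ convexHull ℝ (F ∩ V) :=
    subset_convexHull_inter_of_isExposed V.finite_toSet (hP.1 ▸ hFexp) ⟨hq, hfq⟩
  have hcol : Collinear ℝ (F ∩ V) :=
    (collinear_toExposed (by simp) hf P).subset inter_subset_left
  obtain ⟨a, ha, b, hb, hqab⟩ := exists_mem_openSegment_of_collinear hcol hqF fun h => hqV h.2
  refine ⟨a, b, ⟨ha.2, hb.2, ?_, fun p hp => ⟨?_, ?_⟩⟩, hqab⟩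
  · rintro rfl
    rw [openSegment_same, mem_singleton_iff] at hqab
    exact hqV (hqab ▸ ha.2)
  · exact subset_closure (hP.convex.segment_subset ha.1.1 hb.1.1 hp)
  · exact disjoint_right.1 (disjoint_interior_toExposed hf)
      ((hFexp.convex hP.convex).segment_subset ha.1 hb.1 hp)

lemma disjoint_interior_vertices (hP : IsConvexPolygon P V) :
    Disjoint (interior P) (V : Set (ℝ × ℝ)) :=
  hP.extremePoints_eq ▸ disjoint_interior_extremePoints P

lemma disjoint_edgeInteriors_vertices (hP : IsConvexPolygon P V) :
    Disjoint (edgeInteriors P V) (V : Set (ℝ × ℝ)) := by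
  rw [disjoint_left]
  rintro q ⟨a, b, ⟨ha, hb, hne, -⟩, hq⟩ hqV
  obtain ⟨hqa, hqb⟩ := (mem_extremePoints.1 (hP.2.1 q hqV)).2 a (hP.vertices_subset ha) b
    (hP.vertices_subset hb) hq
  exact hne (hqa.trans hqb.symm)

lemma interior_union_edgeInteriors_union_vertices (hP : IsConvexPolygon P V) :
    interior P ∪ (edgeInteriors P V ∪ V) = P := by
  refine Subset.antisymm (union_subset interior_subset <| union_subset
    hP.edgeInteriors_subset hP.vertices_subset) fun q hq => ?_
  by_cases hqi : q ∈ interior P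
  · exact Or.inl hqi
  by_cases hqV : q ∈ V
  · exact Or.inr (Or.inr hqV)
  · exact Or.inr (Or.inl (hP.mem_edgeInteriors_of_notMem hq hqi hqV))

end IsConvexPolygon

end ConvexPolygon

section InwardSet

variable {E : Type*} [NormedAddCommGroup E] [NormedSpace ℝ E] {K : Set E} {q d w w' : E}
  {f : StrongDual ℝ E}

/-- The set of points from which every sufficiently short step in the direction `d` leads into the
interior of `K`; interior points are included. -/
def inwardSet (K : Set E) (d : E) : Set E :=
  {q | ∀ᶠ ε : ℝ in 𝓝[>] 0, q + ε • d ∈ interior K}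

lemma mem_inwardSet : q ∈ inwardSet K d ↔ ∀ᶠ ε : ℝ in 𝓝[>] 0, q + ε • d ∈ interior K :=
  Iff.rfl

/-- Transversality of the direction `d` to the boundary of `K`: a point of `K` moving in the
direction `d` either enters the interior of `K` or leaves `K` at once. For a polygon this says that
`d` is not parallel to an edge. -/
def IsTransverse (K : Set E) (d : E) : Prop :=
  ∀ q ∈ K, q ∉ inwardSet K d → ∀ ε : ℝ, 0 < ε → q + ε • d ∉ K

lemma tendsto_add_smul_nhdsGT_zero (q d : E) :
    Tendsto (fun ε : ℝ => q + ε • d) (𝓝[>] 0) (𝓝 q) := by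
  have hcont : Continuous fun ε : ℝ => q + ε • d := by fun_prop
  simpa using (hcont.tendsto 0).mono_left nhdsWithin_le_nhds

lemma interior_subset_inwardSet : interior K ⊆ inwardSet K d := fun q hq =>
  (tendsto_add_smul_nhdsGT_zero q d).eventually (isOpen_interior.mem_nhds hq)

lemma inwardSet_subset (hK : IsClosed K) : inwardSet K d ⊆ K := fun q hq =>
  hK.mem_of_tendsto (tendsto_add_smul_nhdsGT_zero q d)
    ((mem_inwardSet.1 hq).mono fun _ h => interior_subset h)

lemma mem_inwardSet_of_add_smul_mem_interior (hK : Convex ℝ K) (hq : q ∈ K) {t : ℝ} (ht : 0 < t)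
    (hqt : q + t • d ∈ interior K) : q ∈ inwardSet K d := by
  filter_upwards [Ioc_mem_nhdsGT ht] with ε hε
  have := hK.add_smul_mem_interior' (subset_closure hq) hqt
    (t := ε / t) ⟨div_pos hε.1 ht, (div_le_one ht).2 hε.2⟩
  rwa [smul_smul, div_mul_cancel₀ _ ht.ne'] at this

lemma notMem_inwardSet (h : ∀ ε : ℝ, 0 < ε → q + ε • d ∉ K) : q ∉ inwardSet K d := fun hq => by
  obtain ⟨ε, hε, hε0⟩ := ((mem_inwardSet.1 hq).and self_mem_nhdsWithin).exists
  exact h ε hε0 (interior_subset hε)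

lemma add_smul_notMem_of_mem_inwardSet_neg (hK : Convex ℝ K) (hqi : q ∉ interior K)
    (hq : q ∈ inwardSet K (-d)) {ε : ℝ} (hε : 0 < ε) : q + ε • d ∉ K := by
  intro hmem
  obtain ⟨t, hqt, ht : 0 < t⟩ := ((mem_inwardSet.1 hq).and self_mem_nhdsWithin).exists
  refine hqi (hK.openSegment_interior_self_subset_interior hqt hmem
    ⟨ε / (t + ε), t / (t + ε), by positivity, by positivity, by field_simp; ring, ?_⟩)
  match_scalars <;> field_simp <;> ring

lemma inwardSet_inter_inwardSet_neg (hK : Convex ℝ K) :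
    inwardSet K d ∩ inwardSet K (-d) = interior K := by
  refine Subset.antisymm (fun q hq => ?_)
    (subset_inter interior_subset_inwardSet interior_subset_inwardSet)
  by_contra hqi
  exact notMem_inwardSet (fun ε hε => add_smul_notMem_of_mem_inwardSet_neg hK hqi hq.2 hε) hq.1

lemma add_smul_notMem_of_toExposed_eq_singleton (hf : f.toExposed K = {w}) (hd : d ≠ 0)
    (hfd : f d = 0) {ε : ℝ} (hε : 0 < ε) : w + ε • d ∉ K := fun hmem => by
  have hlt := lt_of_toExposed_eq_singleton hf hmem (by simp [hε.ne', hd])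
  simp [hfd] at hlt

lemma notMem_inwardSet_of_toExposed_eq_singleton (hf : f.toExposed K = {w}) (hd : d ≠ 0)
    (hfd : f d = 0) : w ∉ inwardSet K d :=
  notMem_inwardSet fun _ => add_smul_notMem_of_toExposed_eq_singleton hf hd hfd

section SupportingLines

variable (hK : Convex ℝ K) (hint : (interior K).Nonempty) (hmax : f.toExposed K = {w})
  (hmin : (-f).toExposed K = {w'}) (hker : f.ker = ℝ ∙ d)

include hK hint hmax hmin hker

lemma mem_inwardSet_or_mem_inwardSet_neg (hq : q ∈ K) (hqw : q ≠ w) (hqw' : q ≠ w') :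
    q ∈ inwardSet K d ∨ q ∈ inwardSet K (-d) := by
  by_cases hqi : q ∈ interior K
  · exact Or.inl (interior_subset_inwardSet hqi)
  -- `q` lies strictly between the two supporting lines, so its parallel to them meets the interior.
  have hlt := lt_of_toExposed_eq_singleton hmax hq hqw
  have hgt := neg_lt_neg_iff.1 (lt_of_toExposed_eq_singleton hmin hq hqw')
  obtain ⟨p, hp, hpq⟩ := exists_mem_interior_apply_eq hK hint
    (mem_of_toExposed_eq_singleton hmax) (mem_of_toExposed_eq_singleton hmin) ⟨hgt, hlt⟩
  have hpq_ker : p - q ∈ f.ker := by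
    rw [LinearMap.mem_ker, map_sub, sub_eq_zero]
    exact hpq
  rw [hker, Submodule.mem_span_singleton] at hpq_ker
  obtain ⟨t, ht⟩ := hpq_ker
  obtain rfl : q + t • d = p := by rw [ht, add_sub_cancel]
  rcases lt_trichotomy t 0 with ht | rfl | ht
  · exact Or.inr (mem_inwardSet_of_add_smul_mem_interior hK hq (neg_pos.2 ht) (by simpa using hp))
  · exact absurd (by simpa using hp) hqi
  · exact Or.inl (mem_inwardSet_of_add_smul_mem_interior hK hq ht hp)

lemma isTransverse_of_ker_eq_span (hd : d ≠ 0) : IsTransverse K d := by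
  have hfd : f d = 0 := hker.ge (Submodule.mem_span_singleton_self d)
  intro q hq hqd ε hε
  by_cases hqw : q = w
  · exact hqw ▸ add_smul_notMem_of_toExposed_eq_singleton hmax hd hfd hε
  by_cases hqw' : q = w'
  · exact hqw' ▸ add_smul_notMem_of_toExposed_eq_singleton hmin hd (by simp [hfd]) hε
  exact add_smul_notMem_of_mem_inwardSet_neg hK (fun h => hqd (interior_subset_inwardSet h))
    ((mem_inwardSet_or_mem_inwardSet_neg hK hint hmax hmin hker hq hqw hqw').resolve_left hqd) hε

lemma inwardSet_union_inwardSet_neg (hKc : IsClosed K) (hd : d ≠ 0) :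
    inwardSet K d ∪ inwardSet K (-d) = K \ {w, w'} := by
  have hfd : f d = 0 := hker.ge (Submodule.mem_span_singleton_self d)
  have hsub : ∀ e : E, e ≠ 0 → f e = 0 → inwardSet K e ⊆ K \ {w, w'} := by
    refine fun e he hfe q hq => ⟨inwardSet_subset hKc hq, ?_⟩
    rintro (rfl | rfl)
    · exact notMem_inwardSet_of_toExposed_eq_singleton hmax he hfe hq
    · exact notMem_inwardSet_of_toExposed_eq_singleton hmin he (by simp [hfe]) hq
  refine Subset.antisymm (union_subset (hsub d hd hfd) ?_) fun q ⟨hq, hqww'⟩ => ?_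
  · exact hsub (-d) (neg_ne_zero.2 hd) (by simp [hfd])
  rw [mem_insert_iff, mem_singleton_iff, not_or] at hqww'
  exact mem_inwardSet_or_mem_inwardSet_neg hK hint hmax hmin hker hq hqww'.1 hqww'.2

end SupportingLines

end InwardSet

section TranslateCount

/-- The number of indices `i` such that `v` lies in the translate `A + x i`. Being an `ncard`, it is
`0` if there are infinitely many such indices. -/
noncomputable def translateCount {ι E : Type*} [Sub E] (x : ι → E) (v : E) (A : Set E) : ℕ :=
  {i | v - x i ∈ A}.ncard

variable {ι E : Type*} [SeminormedAddCommGroup E] {x : ι → E} {A B : Set E}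
  (hx : ∀ R : ℝ, {i | ‖x i‖ ≤ R}.Finite)

include hx

lemma finite_setOf_sub_mem_s4 (hA : Bornology.IsBounded A) (v : E) : {i | v - x i ∈ A}.Finite := by
  obtain ⟨R, hR⟩ := hA.exists_norm_le
  refine (hx (‖v‖ + R)).subset fun i hi => ?_
  calc
    ‖x i‖ = ‖v - (v - x i)‖ := by rw [sub_sub_cancel]
    _ ≤ ‖v‖ + ‖v - x i‖ := norm_sub_le _ _
    _ ≤ ‖v‖ + R := by gcongr; exact hR _ hi

lemma translateCount_union_add_inter (hA : Bornology.IsBounded A) (hB : Bornology.IsBounded B)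
    (v : E) : translateCount x v (A ∪ B) + translateCount x v (A ∩ B) =
      translateCount x v A + translateCount x v B :=
  ncard_union_add_ncard_inter _ _ (finite_setOf_sub_mem_s4 hx hA v) (finite_setOf_sub_mem_s4 hx hB v)

lemma translateCount_union (hA : Bornology.IsBounded A) (hB : Bornology.IsBounded B)
    (hAB : Disjoint A B) (v : E) :
    translateCount x v (A ∪ B) = translateCount x v A + translateCount x v B :=
  ncard_union_eq (hAB.preimage fun i => v - x i) (finite_setOf_sub_mem_s4 hx hA v)
    (finite_setOf_sub_mem_s4 hx hB v)

lemma translateCount_finset (V : Finset E) (v : E) :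
    translateCount x v V = ∑ w ∈ V, translateCount x v {w} := by
  classical
  induction V using Finset.induction_on with
  | empty => simp [translateCount]
  | insert w V hw ih =>
    rw [Finset.coe_insert, insert_eq, translateCount_union hx Bornology.isBounded_singleton
      V.finite_toSet.isBounded (by simpa using hw), ih, Finset.sum_insert hw]

lemma translateCount_singleton_pos (v : E) (j : ι) : 0 < translateCount x v {v - x j} :=
  (ncard_pos (finite_setOf_sub_mem_s4 hx Bornology.isBounded_singleton v)).2 ⟨j, rfl⟩

end TranslateCount

section Perturbation

variable {ι E : Type*} [NormedAddCommGroup E] [NormedSpace ℝ E] {x : ι → E} {K : Set E} {d : E}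

lemma IsTransverse.eventually_mem_interior_or_notMem (hd : IsTransverse K d) (hK : IsClosed K)
    (q : E) : ∀ᶠ ε : ℝ in 𝓝[>] 0, (q ∈ inwardSet K d ∧ q + ε • d ∈ interior K) ∨
      (q ∉ inwardSet K d ∧ q + ε • d ∉ K) := by
  by_cases hqd : q ∈ inwardSet K d
  · filter_upwards [hqd] with ε hε using Or.inl ⟨hqd, hε⟩
  by_cases hq : q ∈ K
  · filter_upwards [self_mem_nhdsWithin] with ε hε using Or.inr ⟨hqd, hd q hq hqd ε hε⟩
  · filter_upwards [(tendsto_add_smul_nhdsGT_zero q d).eventually (hK.isOpen_compl.mem_nhds hq)]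
      with ε hε using Or.inr ⟨hqd, hε⟩

lemma IsTransverse.exists_forall_sub_mem_interior_or_notMem (hd : IsTransverse K d)
    (hK : IsCompact K) (hx : ∀ R : ℝ, {i | ‖x i‖ ≤ R}.Finite) (v : E) :
    ∃ p : E, ∀ i, (v - x i ∈ inwardSet K d ∧ p - x i ∈ interior K) ∨
      (v - x i ∉ inwardSet K d ∧ p - x i ∉ K) := by
  -- For `ε ≤ 1` the step `ε • d` brings no point from outside the `‖d‖`-thickening into `K`, so
  -- only finitely many translates restrict `ε`.
  set I : Set ι := {i | v - x i ∈ Metric.cthickening ‖d‖ K}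
  have hI : I.Finite := finite_setOf_sub_mem_s4 hx hK.isBounded.cthickening v
  obtain ⟨ε, hε, hε0, hε1⟩ := (((eventually_all_finite hI).2 fun i _ =>
    hd.eventually_mem_interior_or_notMem hK.isClosed (v - x i)).and
      (Ioc_mem_nhdsGT (zero_lt_one (α := ℝ)))).exists
  refine ⟨v + ε • d, fun i => ?_⟩
  rw [add_sub_right_comm]
  by_cases hi : i ∈ I
  · exact hε i hi
  refine Or.inr ⟨fun h => hi (Metric.self_subset_cthickening K (inwardSet_subset hK.isClosed h)),
    fun h => hi (Metric.mem_cthickening_of_dist_le _ _ _ _ h ?_)⟩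
  calc
    dist (v - x i) (v - x i + ε • d) = ε * ‖d‖ := by
      rw [dist_self_add_right, norm_smul, Real.norm_of_nonneg hε0.le]
    _ ≤ ‖d‖ := mul_le_of_le_one_left (norm_nonneg d) hε1

end Perturbation

namespace IsKFoldTranslativeTiling

variable {ι : Type} {K : Set (ℝ × ℝ)} {x : ι → ℝ × ℝ} {k : ℕ} {c d w : ℝ × ℝ}

lemma translateCount_interior_eq (h : IsKFoldTranslativeTiling K x k) (hK : Bornology.IsBounded K)
    {p : ℝ × ℝ} (hp : ∀ i, p - x i ∈ K → p - x i ∈ interior K) :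
    translateCount x p (interior K) = k := by
  have hfin := finite_setOf_sub_mem_s4 h.1 (hK.subset interior_subset) p
  refine le_antisymm ?_ ?_
  · rw [translateCount, ncard_eq_toFinset_card _ hfin]
    exact h.2.2 p _ fun i hi => hfin.mem_toFinset.1 hi
  · obtain ⟨s, hs, hsK⟩ := h.2.1 p
    rw [← ncard_coe_finset] at hs
    exact hs.trans (ncard_le_ncard (fun i hi => hp i (hsK i hi)) hfin)

lemma translateCount_inwardSet (h : IsKFoldTranslativeTiling K x k) (hK : IsCompact K)
    (hd : IsTransverse K d) (v : ℝ × ℝ) : translateCount x v (inwardSet K d) = k := by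
  obtain ⟨p, hp⟩ := hd.exists_forall_sub_mem_interior_or_notMem hK h.1 v
  have hiff : ∀ i, v - x i ∈ inwardSet K d ↔ p - x i ∈ interior K := fun i =>
    (hp i).elim (fun hi => iff_of_true hi.1 hi.2)
      fun hi => iff_of_false hi.1 fun hpi => hi.2 (interior_subset hpi)
  calc
    translateCount x v (inwardSet K d) = translateCount x p (interior K) := by
      simp only [translateCount, hiff]
    _ = k := h.translateCount_interior_eq hK.isBounded fun i hi =>
      ((hp i).resolve_right fun hpi => hpi.2 hi).2

lemma two_mul_add_translateCount_antipodes (h : IsKFoldTranslativeTiling K x k)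
    (hK : Convex ℝ K) (hKc : IsCompact K) (hint : (interior K).Nonempty)
    (hc : ∀ p ∈ K, 2 • c - p ∈ K) (hw : w ∈ K.exposedPoints ℝ) (v : ℝ × ℝ) :
    2 * k + (translateCount x v {w} + translateCount x v {2 • c - w}) =
      translateCount x v K + translateCount x v (interior K) := by
  obtain ⟨f, hmax⟩ := exists_toExposed_eq_singleton hw
  have hmin := neg_toExposed_eq_singleton_of_symmetric hc hmax
  have hlt := apply_lt_apply_of_toExposed_eq_singleton hint hmax hmin
  have hf : f ≠ 0 := fun h0 => by simp [h0] at hlt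
  obtain ⟨d, hd, hker⟩ := exists_ne_zero_ker_eq_span_singleton (by simp)
    (ContinuousLinearMap.coe_injective.ne hf)
  have hker_neg : f.ker = ℝ ∙ (-d) := by rw [hker, ← neg_singleton, Submodule.span_neg]
  have hcount := h.translateCount_inwardSet hKc
    (isTransverse_of_ker_eq_span hK hint hmax hmin hker hd) v
  have hcount_neg := h.translateCount_inwardSet hKc
    (isTransverse_of_ker_eq_span hK hint hmax hmin hker_neg (neg_ne_zero.2 hd)) v
  have hbdd : ∀ e, Bornology.IsBounded (inwardSet K e) := fun e =>
    hKc.isBounded.subset (inwardSet_subset hKc.isClosed)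
  have hunion := translateCount_union_add_inter h.1 (hbdd d) (hbdd (-d)) v
  rw [inwardSet_union_inwardSet_neg hK hint hmax hmin hker hKc.isClosed hd,
    inwardSet_inter_inwardSet_neg hK, hcount, hcount_neg] at hunion
  have hpair_sub : {w, 2 • c - w} ⊆ K := pair_subset (mem_of_toExposed_eq_singleton hmax)
    (mem_of_toExposed_eq_singleton hmin)
  have hpair := translateCount_union h.1 Bornology.isBounded_singleton
    Bornology.isBounded_singleton (disjoint_singleton.2 fun he => hlt.ne' (congrArg f he)) v
  have hsplit := translateCount_union h.1 (hKc.isBounded.subset sdiff_subset)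
    (hKc.isBounded.subset hpair_sub) disjoint_sdiff_left v
  rw [sdiff_union_of_subset hpair_sub, ← singleton_union, hpair] at hsplit
  rw [← singleton_union] at hunion
  omega

end IsKFoldTranslativeTiling

lemma IsConvexPolygon.translateCount_eq {ι : Type*} {x : ι → ℝ × ℝ} {P : Set (ℝ × ℝ)}
    {V : Finset (ℝ × ℝ)} (hP : IsConvexPolygon P V) (hx : ∀ R : ℝ, {i | ‖x i‖ ≤ R}.Finite)
    (v : ℝ × ℝ) : translateCount x v P = translateCount x v (interior P) +
      (translateCount x v (edgeInteriors P V) + ∑ w ∈ V, translateCount x v {w}) := by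
  have hbdd := hP.isCompact.isBounded
  have hE := hbdd.subset hP.edgeInteriors_subset
  have hV := hbdd.subset hP.vertices_subset
  have hdisj : Disjoint (interior P) (edgeInteriors P V) :=
    disjoint_interior_frontier.mono_right edgeInteriors_subset_frontier
  conv_lhs => rw [← hP.interior_union_edgeInteriors_union_vertices]
  rw [translateCount_union hx (hbdd.subset interior_subset) (hE.union hV)
    (hdisj.union_right hP.disjoint_interior_vertices),
    translateCount_union hx hE hV hP.disjoint_edgeInteriors_vertices, translateCount_finset hx]

lemma two_nsmul_sum_eq_card_nsmul_of_involutive {α M : Type*} [AddCommMonoid M] {s : Finset α}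
    {σ : α → α} {g : α → M} {b : M} (hσ : σ.Involutive) (hs : ∀ a ∈ s, σ a ∈ s)
    (hg : ∀ a ∈ s, g a + g (σ a) = b) : 2 • ∑ a ∈ s, g a = s.card • b := by
  have hsum : ∑ a ∈ s, g (σ a) = ∑ a ∈ s, g a :=
    Finset.sum_nbij' σ σ hs hs (fun a _ => hσ a) (fun a _ => hσ a) fun _ _ => rfl
  calc
    2 • ∑ a ∈ s, g a = ∑ a ∈ s, (g a + g (σ a)) := by
      rw [Finset.sum_add_distrib, hsum, two_nsmul]
    _ = s.card • b := by rw [Finset.sum_congr rfl hg, Finset.sum_const]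

/-- Lemma 2: let `P` be a centrally symmetric convex `2m`-gon and let `P + X` be a
`k`-fold translative tiling of the plane. For a vertex `v ∈ V + X`, writing
`φ(v) = k - #{i : v ∈ int(P) + x i}` and letting `ℓ` be the number of indices `i` such
that `v` lies in the relative interior of some edge of `P + x i`, there is a positive
integer `κ` with `φ(v) = κ (m-1)/2 + ℓ/2`. -/
theorem phi_formula (m : ℕ) (hm : 0 < m)
    (P : Set (ℝ × ℝ)) (V : Finset (ℝ × ℝ))
    (hP : IsConvexPolygon P V) (hV : V.card = 2 * m) (hsym : IsCentrallySymmetric P)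
    (k : ℕ) (hk : 0 < k) (ι : Type) (x : ι → ℝ × ℝ)
    (htile : IsKFoldTranslativeTiling P x k)
    (v : ℝ × ℝ) (j : ι) (hv : v - x j ∈ V) :
    ∃ κ : ℕ, 0 < κ ∧
      (k : ℝ) - ({i : ι | v - x i ∈ interior P}.ncard : ℝ) =
        (κ : ℝ) * ((m : ℝ) - 1) / 2 +
          (({i : ι | ∃ a b : ℝ × ℝ, IsEdge P V a b ∧
            v - x i ∈ openSegment ℝ a b}.ncard : ℝ)) / 2 := by
  obtain ⟨c, hc⟩ := hsym
  set n : ℝ × ℝ → ℕ := fun w => translateCount x v {w}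
  set κ := n (v - x j) + n (2 • c - (v - x j))
  have hcount : ∀ w ∈ V, 2 * k + (n w + n (2 • c - w)) =
      translateCount x v P + translateCount x v (interior P) := fun w hw =>
    htile.two_mul_add_translateCount_antipodes hP.convex hP.isCompact hP.2.2 hc
      (hP.mem_exposedPoints hw) v
  have hpair : ∀ w ∈ V, n w + n (2 • c - w) = κ := fun w hw =>
    Nat.add_left_cancel ((hcount w hw).trans (hcount _ hv).symm)
  have hsum : 2 * ∑ w ∈ V, n w = 2 * m * κ := hV ▸ two_nsmul_sum_eq_card_nsmul_of_involutive
    (fun w => sub_sub_cancel (2 • c) w) (fun w => hP.reflection_mem_vertices hc) hpair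
  have hmain : 2 * (2 * k + κ) = 4 * translateCount x v (interior P) +
      2 * translateCount x v (edgeInteriors P V) + 2 * m * κ := by
    rw [hcount _ hv, hP.translateCount_eq htile.1, ← hsum]
    ring
  refine ⟨κ, Nat.add_pos_left (translateCount_singleton_pos htile.1 v j) _, ?_⟩
  change (k : ℝ) - translateCount x v (interior P) =
    κ * ((m : ℝ) - 1) / 2 + (translateCount x v (edgeInteriors P V) : ℝ) / 2
  have hmainℝ := congrArg (Nat.cast : ℕ → ℝ) hmain
  push_cast at hmainℝ
  linarith
end
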